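/- arXiv:2010.00478 — 4 statements merged into one kernel-verified Lean document; each statement's English description precedes it below -/
import Mathlib

section
/- Let d be a positive integer and let μ be a finite measure on ℝ^d, absolutely continuous with respect to the Lebesgue measure. Then there exists a convex partition of ℝ^d into 2^d parts C₁, …, C_{2^d} with μ(C_j) = μ(ℝ^d)/2^d for every j, such that no affine hyperplane intersects the interiors of all 2^d parts; that is, for every nonzero v ∈ ℝ^d and α ∈ ℝ there exists a part C_j whose interior is disjoint from {x : ⟨x, v⟩ = α}. -/
open MeasureTheory
open scoped RealInnerProductSpace

namespace YY
open Filter Topology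

def sg (b : Bool) : ℝ := if b then 1 else -1

def ps {V : Type*} [AddCommGroup V] [Module ℝ V] :
    (List Bool → ℝ) → (List Bool → V) → List Bool → V
  | _, _, [] => 0
  | a, z, b :: e => a [] • z [] + ps (fun p => a (b :: p)) (fun p => z (b :: p)) e

section ps
variable {V W : Type*} [AddCommGroup V] [Module ℝ V] [AddCommGroup W] [Module ℝ W]

theorem ps_append (a : List Bool → ℝ) (z : List Bool → V) (p : List Bool) (b : Bool) :
    ps a z (p ++ [b]) = ps a z p + a p • z p := by
  induction p generalizing a z with
  | nil => simp [ps]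
  | cons c p ih => simp only [List.cons_append, ps, ih]; abel

theorem ps_congr (a a' : List Bool → ℝ) (z z' : List Bool → V) (e : List Bool)
    (h : ∀ p, p.length < e.length → a p = a' p ∧ z p = z' p) : ps a z e = ps a' z' e := by
  induction e generalizing a z a' z' with
  | nil => simp [ps]
  | cons c p ih =>
    simp only [ps]
    rw [(h [] (by simp)).1, (h [] (by simp)).2, ih]
    intro q hq
    exact h _ (by simpa using hq)

theorem ps_map (T : V →ₗ[ℝ] W) (a : List Bool → ℝ) (z : List Bool → V) (e : List Bool) :
    ps a (fun p => T (z p)) e = T (ps a z e) := by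
  induction e generalizing a z with
  | nil => simp [ps]
  | cons c p ih => simp [ps, ih]

theorem ps_sum {ι : Type*} (s : Finset ι) (v : ι → ℝ) (a : ι → List Bool → ℝ)
    (z : List Bool → V) (e : List Bool) :
    ps (fun p => ∑ i ∈ s, v i * a i p) z e = ∑ i ∈ s, v i • ps (a i) z e := by
  induction e generalizing a z with
  | nil => simp [ps]
  | cons c p ih =>
    simp [ps, ih, Finset.sum_add_distrib, Finset.sum_smul, smul_smul]

theorem ps_smul (t : ℝ) (a : List Bool → ℝ)
    (z : List Bool → V) (e : List Bool) :
    ps (fun p => t * a p) z e = t • ps a z e := by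
  induction e generalizing a z with
  | nil => simp [ps]
  | cons c p ih => simp [ps, ih, smul_smul]

theorem ps_zero (z : List Bool → V) (e : List Bool) :
    ps (fun _ => 0) z e = 0 := by
  induction e generalizing z with
  | nil => simp [ps]
  | cons c p ih => simp [ps, ih]

end ps

section fn
variable {Ω : Type*}

theorem ps_apply (a : List Bool → ℝ) (z : List Bool → Ω → ℝ) (e : List Bool) (x : Ω) :
    ps a z e x = ps a (fun p => z p x) e :=
  (ps_map (LinearMap.proj (R := ℝ) (φ := fun _ : Ω => ℝ) x) a z e).symm

theorem exists_nonneg (m : ℕ) (z : List Bool → Ω → ℝ) (l : List Bool → Filter Ω)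
    (hs : ∀ e : List Bool, e.length = m → ∀ p b, p ++ [b] <+: e → ∀ᶠ x in l e, 0 ≤ sg b * z p x)
    (a : List Bool → ℝ) :
    ∃ e : List Bool, e.length = m ∧ ∀ᶠ x in l e, 0 ≤ ps a z e x := by
  induction m generalizing z l a with
  | zero => exact ⟨[], rfl, by simp [ps]⟩
  | succ m ih =>
    obtain ⟨b, hb⟩ : ∃ b, 0 ≤ sg b * a [] := by
      rcases le_total 0 (a []) with h | h
      · exact ⟨true, by simpa [sg] using h⟩
      · exact ⟨false, by simpa [sg] using h⟩
    obtain ⟨e, he, h⟩ := ih (fun p => z (b :: p)) (fun p => l (b :: p))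
      (fun e he p c hp => hs (b :: e) (by simp [he]) (b :: p) c (by simpa using hp))
      (fun p => a (b :: p))
    refine ⟨b :: e, by simp [he], ?_⟩
    filter_upwards [h, hs (b :: e) (by simp [he]) [] b (by simp)] with x h1 h2
    simp only [ps, Pi.add_apply, Pi.smul_apply, smul_eq_mul]
    have := mul_nonneg hb h2
    have h3 : sg b * sg b = 1 := by cases b <;> simp [sg]
    have : 0 ≤ (sg b * sg b) * (a [] * z [] x) := by linarith
    rw [h3] at this
    linarith

theorem exists_pos (m : ℕ) (z : List Bool → Ω → ℝ) (l : List Bool → Filter Ω)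
    (hs : ∀ e : List Bool, e.length = m → ∀ p b, p ++ [b] <+: e → ∀ᶠ x in l e, 0 < sg b * z p x)
    (a : List Bool → ℝ) (p : List Bool) (hp : p.length < m) (hap : a p ≠ 0) :
    ∃ e : List Bool, e.length = m ∧ ∀ᶠ x in l e, 0 < ps a z e x := by
  induction m generalizing z l a p with
  | zero => simp at hp
  | succ m ih =>
    by_cases h0 : a [] = 0
    · obtain _ | ⟨b, p⟩ := p
      · exact absurd h0 hap
      obtain ⟨e, he, h⟩ := ih (fun p => z (b :: p)) (fun p => l (b :: p))
        (fun e he p c hp => hs (b :: e) (by simp [he]) (b :: p) c (by simpa using hp))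
        (fun p => a (b :: p)) p (by simpa using hp) hap
      refine ⟨b :: e, by simp [he], ?_⟩
      filter_upwards [h] with x h1
      simpa [ps, h0] using h1
    · obtain ⟨b, hb⟩ : ∃ b, 0 < sg b * a [] := by
        rcases lt_or_gt_of_ne h0 with h | h
        · exact ⟨false, by simpa [sg] using h⟩
        · exact ⟨true, by simpa [sg] using h⟩
      obtain ⟨e, he, h⟩ := exists_nonneg m (fun p => z (b :: p)) (fun p => l (b :: p))
        (fun e he p c hp => (hs (b :: e) (by simp [he]) (b :: p) c (by simpa using hp)).mono
          fun _ h => h.le)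
        (fun p => a (b :: p))
      refine ⟨b :: e, by simp [he], ?_⟩
      filter_upwards [h, hs (b :: e) (by simp [he]) [] b (by simp)] with x h1 h2
      simp only [ps, Pi.add_apply, Pi.smul_apply, smul_eq_mul]
      have := mul_pos hb h2
      have h3 : sg b * sg b = 1 := by cases b <;> simp [sg]
      have : 0 < (sg b * sg b) * (a [] * z [] x) := by linarith
      rw [h3] at this
      linarith

end fn

section good
variable {Ω : Type*} [MeasurableSpace Ω]

def Adm (f : Ω → ℝ) : Prop := Measurable f ∧ ∃ C, ∀ x, |f x| ≤ C

theorem Adm.sub_mul {f z : Ω → ℝ} (hf : Adm f) (hz : Adm z) (a : ℝ) : Adm (f - a • z) := by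
  obtain ⟨hf, C, hC⟩ := hf
  obtain ⟨hz, D, hD⟩ := hz
  refine ⟨hf.sub (hz.const_smul a), C + |a| * D, fun x => ?_⟩
  calc |(f - a • z) x| = |f x - a * z x| := by simp
    _ ≤ |f x| + |a * z x| := abs_sub _ _
    _ ≤ _ := by rw [abs_mul]; exact add_le_add (hC x) (by gcongr; exact hD x)

structure Good (F : Filter Ω) (Φ : (Ω → ℝ) → ℝ) : Prop where
  mono : ∀ f g, Adm f → Adm g → ∀ δ : ℝ, (∀ᶠ x in F, f x ≤ g x + δ) → Φ f ≤ Φ g + δ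
  lo : ∀ f z, Adm f → Adm z → (∀ᶠ x in F, 0 < z x) → ∀ K, ∃ a : ℝ, 0 ≤ a ∧ Φ (f - a • z) ≤ K
  hi : ∀ f z, Adm f → Adm z → (∀ᶠ x in F, 0 < z x) → ∀ K, ∃ a : ℝ, a ≤ 0 ∧ K ≤ Φ (f - a • z)

theorem Good.cont {F : Filter Ω} {Φ : (Ω → ℝ) → ℝ} (h : Good F Φ) {f z : Ω → ℝ}
    (hf : Adm f) (hz : Adm z) : Continuous fun a : ℝ => Φ (f - a • z) := by
  obtain ⟨_, C, hC⟩ := id hz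
  have key : ∀ a b : ℝ, Φ (f - a • z) ≤ Φ (f - b • z) + C * |a - b| := by
    intro a b
    refine h.mono _ _ (hf.sub_mul hz a) (hf.sub_mul hz b) _ (Eventually.of_forall fun x => ?_)
    simp only [Pi.sub_apply, Pi.smul_apply, smul_eq_mul]
    have h1 : (b - a) * z x ≤ |a - b| * C := by
      refine (le_abs_self _).trans ?_
      rw [abs_mul, abs_sub_comm]
      gcongr
      exact hC x
    linarith
  have : LipschitzWith (Real.toNNReal C) fun a : ℝ => Φ (f - a • z) := by
    refine LipschitzWith.of_le_add_mul _ fun a b => (key a b).trans ?_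
    rw [Real.dist_eq]
    gcongr
    exact Real.le_coe_toNNReal C
  exact this.continuous

theorem Good.node {F G : Filter Ω} {Φ Ψ : (Ω → ℝ) → ℝ} (hF : Good F Φ) (hG : Good G Ψ)
    {z : Ω → ℝ} (hz : Adm z) (hzF : ∀ᶠ x in F, 0 < z x) (hzG : ∀ᶠ x in G, z x < 0) :
    ∃ Θ, Good (F ⊔ G) Θ ∧ ∀ f, Adm f → ∃ a : ℝ, Φ (f - a • z) = Θ f ∧ Ψ (f - a • z) = Θ f := by
  have mF : ∀ f, Adm f → ∀ g, Adm g → ∀ δ, (∀ᶠ x in F, f x ≤ g x + δ) → ∀ a b : ℝ, b ≤ a →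
      Φ (f - a • z) ≤ Φ (g - b • z) + δ := by
    intro f hf g hg δ h a b hab
    refine hF.mono _ _ (hf.sub_mul hz a) (hg.sub_mul hz b) _ ?_
    filter_upwards [h, hzF] with x h1 h2
    simp only [Pi.sub_apply, Pi.smul_apply, smul_eq_mul]
    have := mul_le_mul_of_nonneg_right hab h2.le
    linarith
  have mG : ∀ f, Adm f → ∀ g, Adm g → ∀ δ, (∀ᶠ x in G, f x ≤ g x + δ) → ∀ a b : ℝ, a ≤ b →
      Ψ (f - a • z) ≤ Ψ (g - b • z) + δ := by
    intro f hf g hg δ h a b hab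
    refine hG.mono _ _ (hf.sub_mul hz a) (hg.sub_mul hz b) _ ?_
    filter_upwards [h, hzG] with x h1 h2
    simp only [Pi.sub_apply, Pi.smul_apply, smul_eq_mul]
    have := mul_le_mul_of_nonpos_right hab h2.le
    linarith
  have ex : ∀ f, Adm f → ∃ a : ℝ, Φ (f - a • z) = Ψ (f - a • z) := by
    intro f hf
    have hc : Continuous fun a : ℝ => Φ (f - a • z) - Ψ (f - a • z) :=
      (hF.cont hf hz).sub (hG.cont hf hz)
    have hr : (0 : ℝ) ∈ Set.range fun a : ℝ => Φ (f - a • z) - Ψ (f - a • z) := by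
      apply mem_range_of_exists_le_of_exists_ge hc
      · obtain ⟨a, ha, h⟩ := hF.lo f z hf hz hzF (Ψ (f - (0 : ℝ) • z))
        have := mG f hf f hf 0 (by simp) 0 a ha
        exact ⟨a, by linarith⟩
      · obtain ⟨a, ha, h⟩ := hF.hi f z hf hz hzF (Ψ (f - (0 : ℝ) • z))
        have := mG f hf f hf 0 (by simp) a 0 ha
        exact ⟨a, by linarith⟩
    obtain ⟨a, ha⟩ := hr
    exact ⟨a, by simp only at ha; linarith⟩
  choose! α hα using ex
  refine ⟨fun f => Φ (f - α f • z), ⟨?_, ?_, ?_⟩, fun f hf => ⟨α f, rfl, (hα f hf).symm⟩⟩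
  · intro f g hf hg δ h
    rw [eventually_sup] at h
    rcases le_total (α g) (α f) with h' | h'
    · exact mF f hf g hg δ h.1 _ _ h'
    · simp only [hα f hf, hα g hg]
      exact mG f hf g hg δ h.2 _ _ h'
  · intro f w hf hw h K
    rw [eventually_sup] at h
    obtain ⟨a, ha, h1⟩ := hF.lo f w hf hw h.1 K
    obtain ⟨b, hb, h2⟩ := hG.lo f w hf hw h.2 K
    refine ⟨max a b, le_max_of_le_left ha, ?_⟩
    have hfm := hf.sub_mul hw (max a b)
    rcases le_total 0 (α (f - max a b • w)) with h' | h'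
    · have := mF _ hfm (f - a • w) (hf.sub_mul hw a) 0 (by
        filter_upwards [h.1] with x hx
        simp only [Pi.sub_apply, Pi.smul_apply, smul_eq_mul]
        have := mul_le_mul_of_nonneg_right (le_max_left a b) hx.le
        linarith) _ 0 h'
      simp only [zero_smul, sub_zero, add_zero] at this
      linarith
    · have := mG _ hfm (f - b • w) (hf.sub_mul hw b) 0 (by
        filter_upwards [h.2] with x hx
        simp only [Pi.sub_apply, Pi.smul_apply, smul_eq_mul]
        have := mul_le_mul_of_nonneg_right (le_max_right a b) hx.le
        linarith) _ 0 h'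
      simp only [zero_smul, sub_zero, add_zero] at this
      simp only [hα _ hfm]
      linarith
  · intro f w hf hw h K
    rw [eventually_sup] at h
    obtain ⟨a, ha, h1⟩ := hF.hi f w hf hw h.1 K
    obtain ⟨b, hb, h2⟩ := hG.hi f w hf hw h.2 K
    refine ⟨min a b, min_le_of_left_le ha, ?_⟩
    have hfm := hf.sub_mul hw (min a b)
    rcases le_total 0 (α (f - min a b • w)) with h' | h'
    · have := mG (f - b • w) (hf.sub_mul hw b) _ hfm 0 (by
        filter_upwards [h.2] with x hx
        simp only [Pi.sub_apply, Pi.smul_apply, smul_eq_mul]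
        have := mul_le_mul_of_nonneg_right (min_le_right a b) hx.le
        linarith) 0 _ h'
      simp only [zero_smul, sub_zero, add_zero] at this
      simp only [hα _ hfm]
      linarith
    · have := mF (f - a • w) (hf.sub_mul hw a) _ hfm 0 (by
        filter_upwards [h.1] with x hx
        simp only [Pi.sub_apply, Pi.smul_apply, smul_eq_mul]
        have := mul_le_mul_of_nonneg_right (min_le_left a b) hx.le
        linarith) 0 _ h'
      simp only [zero_smul, sub_zero, add_zero] at this
      linarith

/-- weak bisection -/
def WB (ν : Measure Ω) (h : Ω → ℝ) : Prop :=
  2 * ν.real {x | 0 < h x} ≤ ν.real Set.univ ∧ 2 * ν.real {x | h x < 0} ≤ ν.real Set.univ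

theorem tendsto_mono (ν : Measure Ω) [IsFiniteMeasure ν] (s : ℕ → Set Ω) (hs : Monotone s) :
    Tendsto (fun n => ν.real (s n)) atTop (𝓝 (ν.real (⋃ n, s n))) :=
  (ENNReal.tendsto_toReal (measure_ne_top _ _)).comp (tendsto_measure_iUnion_atTop hs)

theorem good_leaf (ν : Measure Ω) [IsFiniteMeasure ν] (hν : ν ≠ 0) :
    ∃ Φ, Good (ae ν) Φ ∧ ∀ f, Adm f → WB ν (fun x => f x - Φ f) := by
  have hM : 0 < ν.real Set.univ := by
    rw [measureReal_def, ENNReal.toReal_pos_iff]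
    exact ⟨by simpa [pos_iff_ne_zero] using hν, measure_lt_top _ _⟩
  set S : (Ω → ℝ) → Set ℝ := fun f => {c | ν.real Set.univ ≤ 2 * ν.real {x | f x ≤ c}} with hS
  have hne : ∀ f, Adm f → (S f).Nonempty := by
    rintro f ⟨_, C, hC⟩
    refine ⟨C, ?_⟩
    have : {x | f x ≤ C} = Set.univ := by
      ext x; simpa using (le_abs_self _).trans (hC x)
    simp only [hS, Set.mem_ofPred_eq, this]
    linarith
  have hbd : ∀ f, Adm f → BddBelow (S f) := by
    rintro f ⟨_, C, hC⟩
    refine ⟨-C, fun c hc => ?_⟩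
    by_contra! hlt
    have : {x | f x ≤ c} = ∅ := by
      ext x
      have := (abs_le.1 (hC x)).1
      simp; linarith
    simp only [hS, Set.mem_ofPred_eq, this] at hc
    simp only [measureReal_empty] at hc
    linarith
  have hcoe : ∀ z, Adm z → (∀ᶠ x in ae ν, 0 < z x) →
      ∃ η > 0, ν.real Set.univ < 2 * ν.real {x | η ≤ z x} := by
    rintro z ⟨hz, -⟩ hpos
    have hmono : Monotone fun n : ℕ => {x | 1 / ((n : ℝ) + 1) ≤ z x} := by
      intro m n hmn x hx
      have hx : 1 / ((m : ℝ) + 1) ≤ z x := hx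
      exact (Nat.one_div_le_one_div hmn).trans hx
    have h1 := tendsto_mono ν _ hmono
    have h2 : ν.real (⋃ n : ℕ, {x | 1 / ((n : ℝ) + 1) ≤ z x}) = ν.real Set.univ := by
      apply measureReal_congr
      filter_upwards [hpos] with x hx
      obtain ⟨n, hn⟩ := exists_nat_one_div_lt hx
      apply propext
      exact ⟨fun _ => trivial, fun _ => Set.mem_iUnion.2 ⟨n, hn.le⟩⟩
    rw [h2] at h1
    have h3 := (h1.eventually (lt_mem_nhds (half_lt_self hM))).exists
    obtain ⟨n, hn⟩ := h3
    exact ⟨1 / ((n : ℝ) + 1), by positivity, by linarith⟩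
  refine ⟨fun f => sInf (S f), ⟨?_, ?_, ?_⟩, ?_⟩
  · intro f g hf hg δ h
    rw [← sub_le_iff_le_add]
    refine le_csInf (hne g hg) fun c hc => ?_
    rw [sub_le_iff_le_add]
    refine csInf_le (hbd f hf) ?_
    have hc : ν.real Set.univ ≤ 2 * ν.real {x | g x ≤ c} := hc
    refine hc.trans ?_
    gcongr 2 * ?_
    refine ENNReal.toReal_mono (measure_ne_top _ _) (measure_mono_ae ?_)
    filter_upwards [h] with x hx h'
    have h' : g x ≤ c := h'
    show f x ≤ c + δ
    linarith
  · intro f z hf hz hpos K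
    obtain ⟨η, hη, h⟩ := hcoe z hz hpos
    obtain ⟨_, C, hC⟩ := id hf
    refine ⟨max 0 ((C - K) / η), le_max_left _ _, ?_⟩
    set a := max 0 ((C - K) / η)
    have ha0 : 0 ≤ a := le_max_left _ _
    have ha : C - K ≤ a * η := by
      rw [← div_le_iff₀ hη]; exact le_max_right _ _
    refine csInf_le (hbd _ (hf.sub_mul hz a)) ?_
    refine h.le.trans ?_
    gcongr 2 * ?_
    refine measureReal_mono (fun x hx => ?_)
    have hx : η ≤ z x := hx
    simp only [Set.mem_ofPred_eq, Pi.sub_apply, Pi.smul_apply, smul_eq_mul]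
    have := mul_le_mul_of_nonneg_left hx ha0
    have := (abs_le.1 (hC x)).2
    linarith
  · intro f z hf hz hpos K
    obtain ⟨η, hη, h⟩ := hcoe z hz hpos
    obtain ⟨_, C, hC⟩ := id hf
    set a := max 0 ((C + K) / η) with ha'
    have ha0 : 0 ≤ a := le_max_left _ _
    have ha : C + K ≤ a * η := by
      rw [← div_le_iff₀ hη]; exact le_max_right _ _
    refine ⟨-a, by linarith, ?_⟩
    refine le_csInf (hne _ (hf.sub_mul hz _)) fun c hc => ?_
    by_contra! hcK
    have hsub : {x | (f - (-a) • z) x ≤ c} ⊆ {x | η ≤ z x}ᶜ := by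
      intro x hx hx2
      have hx2 : η ≤ z x := hx2
      simp only [Set.mem_ofPred_eq, Pi.sub_apply, Pi.smul_apply, smul_eq_mul] at hx
      have := mul_le_mul_of_nonneg_left hx2 ha0
      have := (abs_le.1 (hC x)).1
      linarith
    have h1 := measureReal_mono (μ := ν) hsub
    have h2 := measureReal_compl (μ := ν) (measurableSet_le measurable_const hz.1 :
      MeasurableSet {x | η ≤ z x})
    have hc : ν.real Set.univ ≤ 2 * ν.real {x | (f - (-a) • z) x ≤ c} := hc
    linarith
  · intro f hf
    set m := sInf (S f)
    constructor
    · have hmono : Monotone fun n : ℕ => {x | m + 1 / ((n : ℝ) + 1) < f x} := by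
        intro i j hij x hx
        have hx : m + 1 / ((i : ℝ) + 1) < f x := hx
        show m + 1 / ((j : ℝ) + 1) < f x
        have := Nat.one_div_le_one_div (α := ℝ) hij
        linarith
      have h1 := tendsto_mono ν _ hmono
      have h2 : (⋃ n : ℕ, {x | m + 1 / ((n : ℝ) + 1) < f x}) = {x | 0 < f x - m} := by
        ext x
        simp only [Set.mem_iUnion, Set.mem_ofPred_eq]
        constructor
        · rintro ⟨n, hn⟩
          have : 0 < 1 / ((n : ℝ) + 1) := by positivity
          linarith
        · intro hx
          obtain ⟨n, hn⟩ := exists_nat_one_div_lt hx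
          exact ⟨n, by linarith⟩
      rw [h2] at h1
      refine le_of_tendsto (h1.const_mul 2) (Eventually.of_forall fun n => ?_)
      obtain ⟨c, hc, hcm⟩ := exists_lt_of_csInf_lt (hne f hf)
        (show m < m + 1 / ((n : ℝ) + 1) by
          have : 0 < 1 / ((n : ℝ) + 1) := by positivity
          linarith)
      have hsub : {x | m + 1 / ((n : ℝ) + 1) < f x} ⊆ {x | f x ≤ c}ᶜ := by
        intro x hx hx2
        have hx2 : f x ≤ c := hx2
        have hx : m + 1 / ((n : ℝ) + 1) < f x := hx
        linarith
      have h1 := measureReal_mono (μ := ν) hsub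
      have h2 := measureReal_compl (μ := ν) (measurableSet_le hf.1 measurable_const :
        MeasurableSet {x | f x ≤ c})
      have hc : ν.real Set.univ ≤ 2 * ν.real {x | f x ≤ c} := hc
      linarith
    · have hmono : Monotone fun n : ℕ => {x | f x ≤ m - 1 / ((n : ℝ) + 1)} := by
        intro i j hij x hx
        have hx : f x ≤ m - 1 / ((i : ℝ) + 1) := hx
        show f x ≤ m - 1 / ((j : ℝ) + 1)
        have := Nat.one_div_le_one_div (α := ℝ) hij
        linarith
      have h1 := tendsto_mono ν _ hmono
      have h2 : (⋃ n : ℕ, {x | f x ≤ m - 1 / ((n : ℝ) + 1)}) = {x | f x - m < 0} := by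
        ext x
        simp only [Set.mem_iUnion, Set.mem_ofPred_eq]
        constructor
        · rintro ⟨n, hn⟩
          have : 0 < 1 / ((n : ℝ) + 1) := by positivity
          linarith
        · intro hx
          obtain ⟨n, hn⟩ := exists_nat_one_div_lt (show 0 < m - f x by linarith)
          exact ⟨n, by linarith⟩
      rw [h2] at h1
      refine le_of_tendsto (h1.const_mul 2) (Eventually.of_forall fun n => ?_)
      have hn : m - 1 / ((n : ℝ) + 1) ∉ S f := by
        apply notMem_of_lt_csInf _ (hbd f hf)
        have : 0 < 1 / ((n : ℝ) + 1) := by positivity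
        show _ < m
        linarith
      exact (not_le.1 hn).le

def lf : ℕ → (List Bool → Measure Ω) → Filter Ω
  | 0, μ => ae (μ [])
  | m + 1, μ => lf m (fun p => μ (true :: p)) ⊔ lf m (fun p => μ (false :: p))

theorem ev_lf (m : ℕ) (μ : List Bool → Measure Ω) (P : Ω → Prop)
    (h : ∀ e : List Bool, e.length = m → ∀ᵐ x ∂μ e, P x) : ∀ᶠ x in lf m μ, P x := by
  induction m generalizing μ with
  | zero => exact h [] rfl
  | succ m ih =>
    simp only [lf, eventually_sup]
    exact ⟨ih _ fun e he => h _ (by simp [he]), ih _ fun e he => h _ (by simp [he])⟩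

theorem tree (m : ℕ) (μ : List Bool → Measure Ω) (z : List Bool → Ω → ℝ)
    (hfin : ∀ e : List Bool, e.length = m → IsFiniteMeasure (μ e))
    (hne : ∀ e : List Bool, e.length = m → μ e ≠ 0)
    (hz : ∀ p, Adm (z p))
    (hs : ∀ e : List Bool, e.length = m → ∀ p b, p ++ [b] <+: e → ∀ᵐ x ∂μ e, 0 < sg b * z p x) :
    ∃ Φ, Good (lf m μ) Φ ∧ ∀ f, Adm f → ∃ a : List Bool → ℝ, ∀ e : List Bool, e.length = m →
      WB (μ e) (fun x => f x - Φ f - ps a z e x) := by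
  induction m generalizing μ z with
  | zero =>
    have := hfin [] rfl
    obtain ⟨Φ, h1, h2⟩ := good_leaf (μ []) (hne _ rfl)
    refine ⟨Φ, h1, fun f hf => ⟨0, fun e he => ?_⟩⟩
    obtain rfl := List.length_eq_zero_iff.1 he
    simpa [ps] using h2 f hf
  | succ m ih =>
    have key : ∀ b : Bool, _ := fun b => ih (fun p => μ (b :: p)) (fun p => z (b :: p))
      (fun e he => hfin _ (by simp [he])) (fun e he => hne _ (by simp [he]))
      (fun p => hz _) (fun e he p c hp => hs (b :: e) (by simp [he]) (b :: p) c (by simpa using hp))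
    choose Φ h1 h2 using key
    obtain ⟨Θ, hΘ, h⟩ := (h1 true).node (h1 false) (hz [])
      (ev_lf _ _ _ fun e he => (hs (true :: e) (by simp [he]) [] true (by simp)).mono
        fun x hx => by simpa [sg] using hx)
      (ev_lf _ _ _ fun e he => (hs (false :: e) (by simp [he]) [] false (by simp)).mono
        fun x hx => by simpa [sg] using hx)
    refine ⟨Θ, hΘ, fun f hf => ?_⟩
    obtain ⟨t, ht1, ht2⟩ := h f hf
    have ht : ∀ b, Φ b (f - t • z []) = Θ f := by intro b; cases b <;> assumption
    have h3 : ∀ b, _ := fun b => h2 b (f - t • z []) (hf.sub_mul (hz []) t)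
    choose a ha using h3
    refine ⟨fun p => match p with
      | [] => t
      | b :: p => a b p, fun e he => ?_⟩
    obtain _ | ⟨b, e⟩ := e
    · simp at he
    have := ha b e (by simpa using he)
    rw [ht] at this
    convert this using 2 with x
    simp only [ps, Pi.add_apply, Pi.smul_apply, Pi.sub_apply, smul_eq_mul]
    ring

theorem WB.congr {ν : Measure Ω} {h h' : Ω → ℝ} (hw : WB ν h) (hh : ∀ᵐ x ∂ν, h x = h' x) :
    WB ν h' := by
  have h1 : ν.real {x | 0 < h' x} = ν.real {x | 0 < h x} := by
    apply measureReal_congr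
    filter_upwards [hh] with x hx
    apply propext
    show 0 < h' x ↔ 0 < h x
    rw [hx]
  have h2 : ν.real {x | h' x < 0} = ν.real {x | h x < 0} := by
    apply measureReal_congr
    filter_upwards [hh] with x hx
    apply propext
    show h' x < 0 ↔ h x < 0
    rw [hx]
  unfold WB
  rw [h1, h2]
  exact hw

theorem WB.smul {ν : Measure Ω} {h h' : Ω → ℝ} (hw : WB ν h) (t : ℝ) (ht : 0 < t)
    (hh : ∀ x, h' x = t * h x) : WB ν h' := by
  have hn : ∀ y : ℝ, t * y < 0 ↔ y < 0 := by
    intro y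
    refine ⟨fun h => ?_, mul_neg_of_pos_of_neg ht⟩
    by_contra! hy
    have := mul_nonneg ht.le hy
    linarith
  unfold WB
  simp only [hh, mul_pos_iff_of_pos_left ht, hn]
  exact hw

theorem lim_aux (ν : Measure Ω) [IsFiniteMeasure ν] (s : ℕ → Set Ω) (t : Set Ω) (M : ℝ)
    (h : ∀ x ∈ t, ∀ᶠ n in atTop, x ∈ s n) (hM : ∀ n, 2 * ν.real (s n) ≤ M) :
    2 * ν.real t ≤ M := by
  have hmono : Monotone fun N : ℕ => ⋂ n ≥ N, s n := by
    intro i j hij x hx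
    simp only [Set.mem_iInter] at hx ⊢
    exact fun n hn => hx n (hij.trans hn)
  have h1 := tendsto_mono ν _ hmono
  have h2 : t ⊆ ⋃ N : ℕ, ⋂ n ≥ N, s n := by
    intro x hx
    obtain ⟨N, hN⟩ := eventually_atTop.1 (h x hx)
    simp only [Set.mem_iUnion, Set.mem_iInter]
    exact ⟨N, hN⟩
  have h3 : 2 * ν.real (⋃ N : ℕ, ⋂ n ≥ N, s n) ≤ M := by
    refine le_of_tendsto (h1.const_mul 2) (Eventually.of_forall fun N => ?_)
    refine le_trans ?_ (hM N)
    gcongr 2 * ?_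
    refine measureReal_mono fun x hx => ?_
    simp only [Set.mem_iInter] at hx
    exact hx N le_rfl
  have := measureReal_mono (μ := ν) h2
  linarith

theorem wb_limit (ν : Measure Ω) [IsFiniteMeasure ν] (B : ℕ → Set Ω)
    (hB : ∀ n, MeasurableSet (B n)) (hBx : ∀ x, ∀ᶠ n in atTop, x ∈ B n)
    (u : ℕ → Ω → ℝ) (h : Ω → ℝ) (hu : ∀ x, Tendsto (fun n => u n x) atTop (𝓝 (h x)))
    (hw : ∀ n, WB (ν.restrict (B n)) (u n)) : WB ν h := by
  have hle : ∀ n, (ν.restrict (B n)).real Set.univ ≤ ν.real Set.univ := by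
    intro n
    rw [measureReal_restrict_apply' (hB n)]
    exact measureReal_mono (Set.subset_univ _)
  constructor
  · refine lim_aux ν (fun n => {x | 0 < u n x} ∩ B n) _ _ ?_ ?_
    · intro x hx
      have hx : 0 < h x := hx
      filter_upwards [hBx x, (hu x).eventually (lt_mem_nhds hx)] with n h1 h2
      exact ⟨h2, h1⟩
    · intro n
      rw [← measureReal_restrict_apply' (hB n)]
      exact (hw n).1.trans (hle n)
  · refine lim_aux ν (fun n => {x | u n x < 0} ∩ B n) _ _ ?_ ?_
    · intro x hx
      have hx : h x < 0 := hx
      filter_upwards [hBx x, (hu x).eventually (gt_mem_nhds hx)] with n h1 h2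
      exact ⟨h2, h1⟩
    · intro n
      rw [← measureReal_restrict_apply' (hB n)]
      exact (hw n).2.trans (hle n)

theorem ps_cont {X : Type*} [TopologicalSpace X] (a : X → List Bool → ℝ) (z : List Bool → ℝ)
    (ha : ∀ p, Continuous fun t => a t p) (e : List Bool) : Continuous fun t => ps (a t) z e := by
  induction e generalizing a z with
  | nil => simpa [ps] using continuous_const
  | cons b e ih =>
    simp only [ps]
    exact ((ha []).smul continuous_const).add (ih _ _ fun p => ha _)

def ext (m : ℕ) (a : {p : List Bool | p.length < m} → ℝ) (p : List Bool) : ℝ :=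
  if h : p.length < m then a ⟨p, h⟩ else 0

theorem stage (m : ℕ) (μ : List Bool → Measure Ω) (z : List Bool → Ω → ℝ) (f : Ω → ℝ)
    (hfin : ∀ e : List Bool, e.length = m → IsFiniteMeasure (μ e))
    (hne : ∀ e : List Bool, e.length = m → μ e ≠ 0)
    (hz : ∀ p, Measurable (z p)) (hf : Measurable f)
    (B : ℕ → Set Ω) (hB : ∀ n, MeasurableSet (B n)) (hBm : Monotone B)
    (hBx : ∀ x, ∃ n, x ∈ B n)
    (hbz : ∀ n p, ∃ C, ∀ x ∈ B n, |z p x| ≤ C) (hbf : ∀ n, ∃ C, ∀ x ∈ B n, |f x| ≤ C)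
    (hs : ∀ e : List Bool, e.length = m → ∀ p b, p ++ [b] <+: e → ∀ᵐ x ∂μ e, 0 < sg b * z p x) :
    ∃ (c : ℝ) (a : List Bool → ℝ), ∀ e : List Bool, e.length = m →
      WB (μ e) (fun x => f x - c - ps a z e x) := by
  have hBx' : ∀ x, ∀ᶠ n in atTop, x ∈ B n := by
    intro x
    obtain ⟨n, hn⟩ := hBx x
    exact eventually_atTop.2 ⟨n, fun k hk => hBm hk hn⟩
  have hadm : ∀ n (g : Ω → ℝ), Measurable g → (∃ C, ∀ x ∈ B n, |g x| ≤ C) →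
      Adm ((B n).indicator g) := by
    rintro n g hg ⟨C, hC⟩
    refine ⟨hg.indicator (hB n), max C 0, fun x => ?_⟩
    by_cases hx : x ∈ B n
    · simpa [hx] using Or.inl (hC x hx)
    · simp [hx]
  have : Finite {p : List Bool | p.length < m} := List.finite_length_lt Bool m
  have : Fintype {p : List Bool | p.length < m} := Fintype.ofFinite _
  have hev : ∀ᶠ n in atTop, ∀ e ∈ {e : List Bool | e.length = m}, (μ e).restrict (B n) ≠ 0 := by
    rw [eventually_all_finite (List.finite_length_eq Bool m)]
    intro e he
    have := hfin e he
    have h1 := tendsto_measure_iUnion_atTop (μ := μ e) hBm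
    have h2 : (⋃ n, B n) = Set.univ := by ext x; simpa using hBx x
    rw [h2] at h1
    have h3 : 0 < μ e Set.univ := by simpa [pos_iff_ne_zero] using hne e he
    filter_upwards [h1.eventually (lt_mem_nhds h3)] with n hn
    rw [Ne, Measure.restrict_eq_zero]
    exact hn.ne'
  have key : ∀ᶠ n in atTop, ∃ x : ℝ × ℝ × ({p : List Bool | p.length < m} → ℝ),
      ‖x‖ = 1 ∧ 0 ≤ x.1 ∧ ∀ e : List Bool, e.length = m →
        WB ((μ e).restrict (B n)) (fun w => x.1 * f w - x.2.1 - ps (ext m x.2.2) z e w) := by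
    filter_upwards [hev] with n hn
    obtain ⟨Φ, -, hΦ⟩ := tree m (fun e => (μ e).restrict (B n)) (fun p => (B n).indicator (z p))
      (fun e he => by have := hfin e he; infer_instance) hn (fun p => hadm n _ (hz p) (hbz n p))
      (fun e he p b hp => by
        filter_upwards [ae_restrict_of_ae (hs e he p b hp), ae_restrict_mem (hB n)] with x h1 h2
        simpa [h2] using h1)
    obtain ⟨a, ha⟩ := hΦ _ (hadm n f hf (hbf n))
    set c := Φ ((B n).indicator f)
    let y : ℝ × ℝ × ({p : List Bool | p.length < m} → ℝ) := (1, c, fun p => a p.1)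
    have hy : 0 < ‖y‖ := by
      apply norm_pos_iff.2
      intro h
      have := congrArg Prod.fst h
      simp [y] at this
    refine ⟨‖y‖⁻¹ • y, ?_, ?_, fun e he => ?_⟩
    · rw [norm_smul, norm_inv, norm_norm, inv_mul_cancel₀ hy.ne']
    · simp [y]
    · have h1 : WB ((μ e).restrict (B n)) (fun w => f w - c - ps a z e w) := by
        refine (ha e he).congr ?_
        filter_upwards [ae_restrict_mem (hB n)] with x hx
        simp only [hx, Set.indicator_of_mem, ps_apply]
      refine h1.smul ‖y‖⁻¹ (inv_pos.2 hy) fun w => ?_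
      have h2 : ps (ext m (‖y‖⁻¹ • y).2.2) z e = ps (fun p => ‖y‖⁻¹ * a p) z e := by
        apply ps_congr
        intro p hp
        rw [he] at hp
        simp [ext, hp, y]
      rw [h2, ps_smul]
      simp [y]
      ring
  obtain ⟨N, hN⟩ := eventually_atTop.1 key
  choose! x hx1 hx2 hx3 using hN
  obtain ⟨y, hy, φ, hφ, hlim⟩ := (isCompact_sphere
    (0 : ℝ × ℝ × ({p : List Bool | p.length < m} → ℝ)) 1).tendsto_subseq
    (x := fun n => x (n + N)) (fun n => by simpa using hx1 _ (Nat.le_add_left _ _))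
  have hy1 : ‖y‖ = 1 := by simpa using hy
  have hy2 : 0 ≤ y.1 := ge_of_tendsto' ((continuous_fst.tendsto y).comp hlim)
    fun n => hx2 _ (Nat.le_add_left _ _)
  have hy3 : ∀ e : List Bool, e.length = m →
      WB (μ e) (fun w => y.1 * f w - y.2.1 - ps (ext m y.2.2) z e w) := by
    intro e he
    have := hfin e he
    refine wb_limit (μ e) (fun n => B (φ n + N)) (fun n => hB _) ?_ _ _ ?_
      (fun n => hx3 (φ n + N) (Nat.le_add_left _ _) e he)
    · intro w
      exact ((tendsto_add_atTop_nat N).comp hφ.tendsto_atTop).eventually (hBx' w)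
    · intro w
      have hc : Continuous fun x : ℝ × ℝ × ({p : List Bool | p.length < m} → ℝ) =>
          x.1 * f w - x.2.1 - ps (ext m x.2.2) z e w := by
        simp only [ps_apply]
        refine Continuous.sub (by fun_prop) (ps_cont _ _ (fun p => ?_) _)
        unfold ext
        split_ifs <;> fun_prop
      exact (hc.tendsto y).comp hlim
  have hpos : y.1 ≠ 0 := by
    intro h0
    have hno : ∀ e : List Bool, e.length = m → ∀ t : ℝ, t ≠ 0 →
        ¬ ∀ᵐ w ∂μ e, 0 < t * (y.2.1 + ps (ext m y.2.2) z e w) := by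
      intro e he t ht hae
      have := hfin e he
      have h1 := hy3 e he
      have hM : 0 < (μ e).real Set.univ := by
        rw [measureReal_def, ENNReal.toReal_pos_iff]
        exact ⟨by simpa [pos_iff_ne_zero] using hne e he, measure_lt_top _ _⟩
      rcases lt_or_gt_of_ne ht with h | h
      · have h2 : (μ e).real {w | 0 < y.1 * f w - y.2.1 - ps (ext m y.2.2) z e w}
            = (μ e).real Set.univ := by
          apply measureReal_congr
          filter_upwards [hae] with w hw
          apply propext
          refine ⟨fun _ => trivial, fun _ => ?_⟩
          show 0 < y.1 * f w - y.2.1 - ps (ext m y.2.2) z e w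
          have := neg_of_mul_pos_right hw h.le
          rw [h0]; linarith
        have := h1.1
        linarith
      · have h2 : (μ e).real {w | y.1 * f w - y.2.1 - ps (ext m y.2.2) z e w < 0}
            = (μ e).real Set.univ := by
          apply measureReal_congr
          filter_upwards [hae] with w hw
          apply propext
          refine ⟨fun _ => trivial, fun _ => ?_⟩
          show y.1 * f w - y.2.1 - ps (ext m y.2.2) z e w < 0
          have := pos_of_mul_pos_right hw h.le
          rw [h0]; linarith
        have := h1.2
        linarith
    by_cases hc : y.2.1 = 0
    · have hex : ∃ p : List Bool, p.length < m ∧ ext m y.2.2 p ≠ 0 := by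
        by_contra! hcon
        have : y = 0 := by
          refine Prod.ext h0 (Prod.ext hc ?_)
          funext p
          have h := hcon p.1 p.2
          have hp : p.1.length < m := p.2
          simpa [ext, hp] using h
        rw [this] at hy1
        simp at hy1
      obtain ⟨p, hp, hap⟩ := hex
      obtain ⟨e, he, h⟩ := exists_pos m z (fun e => ae (μ e)) hs _ p hp hap
      refine hno e he 1 one_ne_zero ?_
      filter_upwards [h] with w hw
      rw [hc]; linarith
    · obtain ⟨e, he, h⟩ := exists_nonneg m z (fun e => ae (μ e))
        (fun e he p b hp => (hs e he p b hp).mono fun _ h => h.le)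
        (fun p => y.2.1 * ext m y.2.2 p)
      refine hno e he y.2.1 hc ?_
      filter_upwards [h] with w hw
      rw [ps_smul] at hw
      simp only [Pi.smul_apply, smul_eq_mul] at hw
      have := mul_self_pos.2 hc
      rw [mul_add]
      linarith
  have hpos' : 0 < y.1 := lt_of_le_of_ne hy2 (Ne.symm hpos)
  refine ⟨y.1⁻¹ * y.2.1, fun p => y.1⁻¹ * ext m y.2.2 p, fun e he => ?_⟩
  refine (hy3 e he).smul y.1⁻¹ (inv_pos.2 hpos') fun w => ?_
  rw [ps_smul]
  simp only [Pi.smul_apply, smul_eq_mul]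
  field_simp

end good

section main
variable {d : ℕ}

noncomputable def evalL (x : EuclideanSpace ℝ (Fin d)) : (EuclideanSpace ℝ (Fin d) →ᵃ[ℝ] ℝ) →ₗ[ℝ] ℝ where
  toFun g := g x
  map_add' _ _ := rfl
  map_smul' _ _ := rfl

noncomputable def dirL (x : EuclideanSpace ℝ (Fin d)) : (EuclideanSpace ℝ (Fin d) →ᵃ[ℝ] ℝ) →ₗ[ℝ] ℝ where
  toFun g := g.linear x
  map_add' _ _ := rfl
  map_smul' _ _ := rfl

noncomputable def coord (k : Fin d) : EuclideanSpace ℝ (Fin d) →ᵃ[ℝ] ℝ :=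
  (EuclideanSpace.proj k : EuclideanSpace ℝ (Fin d) →L[ℝ] ℝ).toLinearMap.toAffineMap

theorem coord_apply (k : Fin d) (x : EuclideanSpace ℝ (Fin d)) : coord k x = x k := rfl

theorem coord_linear (k : Fin d) (x : EuclideanSpace ℝ (Fin d)) : (coord k).linear x = x k := rfl

def cell (z : List Bool → (EuclideanSpace ℝ (Fin d) →ᵃ[ℝ] ℝ)) (e : List Bool) :
    Set (EuclideanSpace ℝ (Fin d)) :=
  {x | ∀ p b, p ++ [b] <+: e → 0 ≤ sg b * z p x}

theorem ps_eval (a : List Bool → ℝ) (z : List Bool → (EuclideanSpace ℝ (Fin d) →ᵃ[ℝ] ℝ))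
    (e : List Bool) (x : EuclideanSpace ℝ (Fin d)) :
    ps a (fun p => (z p : EuclideanSpace ℝ (Fin d) → ℝ)) e x = ps a z e x := by
  rw [ps_apply]
  exact ps_map (evalL x) a z e

theorem cell_append (z : List Bool → (EuclideanSpace ℝ (Fin d) →ᵃ[ℝ] ℝ)) (e : List Bool) (b : Bool) :
    cell z (e ++ [b]) = {x | 0 ≤ sg b * z e x} ∩ cell z e := by
  ext x
  constructor
  · intro h
    exact ⟨h e b (List.prefix_refl _), fun p c hp => h p c (hp.trans (List.prefix_append _ _))⟩
  · rintro ⟨h1, h2⟩ p c hp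
    rw [List.prefix_concat_iff] at hp
    rcases hp with hp | hp
    · obtain ⟨rfl, hc⟩ := List.append_inj' hp rfl
      obtain rfl : c = b := by simpa using hc
      exact h1
    · exact h2 p c hp

theorem len_of_prefix {p e : List Bool} {b : Bool} (h : p ++ [b] <+: e) : p.length < e.length := by
  have := h.length_le
  simp at this
  omega

theorem cell_congr (z z' : List Bool → (EuclideanSpace ℝ (Fin d) →ᵃ[ℝ] ℝ)) (e : List Bool)
    (h : ∀ p, p.length < e.length → z p = z' p) : cell z e = cell z' e := by
  ext x
  constructor
  · intro hx p b hp
    rw [← h p (len_of_prefix hp)]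
    exact hx p b hp
  · intro hx p b hp
    rw [h p (len_of_prefix hp)]
    exact hx p b hp

theorem cell_closed (z : List Bool → (EuclideanSpace ℝ (Fin d) →ᵃ[ℝ] ℝ)) (e : List Bool) :
    IsClosed (cell z e) := by
  have : cell z e = ⋂ p, ⋂ b, ⋂ (_ : p ++ [b] <+: e), {x | 0 ≤ sg b * z p x} := by
    ext x
    simp only [Set.mem_iInter]
    rfl
  rw [this]
  refine isClosed_iInter fun p => isClosed_iInter fun b => isClosed_iInter fun _ => ?_
  exact isClosed_le continuous_const
    (continuous_const.mul (AffineMap.continuous_of_finiteDimensional (z p)))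

theorem cell_convex (z : List Bool → (EuclideanSpace ℝ (Fin d) →ᵃ[ℝ] ℝ)) (e : List Bool) :
    Convex ℝ (cell z e) := by
  intro x hx y hy s t hs ht hst p b hp
  have h1 := hx p b hp
  have h2 := hy p b hp
  have h3 : z p (s • x + t • y) = s * z p x + t * z p y := by
    have := Convex.combo_affine_apply (f := z p) (x := x) (y := y) hst
    simpa using this
  rw [h3]
  have := mul_nonneg hs h1
  have := mul_nonneg ht h2
  linarith

theorem cell_cover (z : List Bool → (EuclideanSpace ℝ (Fin d) →ᵃ[ℝ] ℝ)) (k : ℕ)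
    (x : EuclideanSpace ℝ (Fin d)) : ∃ e : List Bool, e.length = k ∧ x ∈ cell z e := by
  induction k with
  | zero => exact ⟨[], rfl, fun p b hp => by simp at hp⟩
  | succ k ih =>
    obtain ⟨e, he, h⟩ := ih
    rcases le_total 0 (z e x) with h' | h'
    · refine ⟨e ++ [true], by simp [he], ?_⟩
      rw [cell_append]
      exact ⟨by simpa [sg] using h', h⟩
    · refine ⟨e ++ [false], by simp [he], ?_⟩
      rw [cell_append]
      exact ⟨by simpa [sg] using h', h⟩

theorem null_affine (g : EuclideanSpace ℝ (Fin d) →ᵃ[ℝ] ℝ) (v : EuclideanSpace ℝ (Fin d))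
    (hv : g.linear v ≠ 0) : volume {x | g x = 0} = 0 := by
  have h1 : {x | g x = 0} = (((AffineSubspace.mk' (0 : ℝ) (⊥ : Submodule ℝ ℝ)).comap g :
      AffineSubspace ℝ (EuclideanSpace ℝ (Fin d))) : Set (EuclideanSpace ℝ (Fin d))) := by
    ext x
    simp [AffineSubspace.mem_mk']
  rw [h1]
  apply Measure.addHaar_affineSubspace
  intro htop
  have h2 : ∀ x, g x = 0 := by
    intro x
    have : x ∈ {x | g x = 0} := by rw [h1, htop]; trivial
    exact this
  apply hv
  have h3 := g.map_vadd 0 v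
  rw [h2, h2] at h3
  simpa using h3.symm

theorem first_diff : ∀ (e e' : List Bool), e.length = e'.length → e ≠ e' →
    ∃ p, (p ++ [true] <+: e ∧ p ++ [false] <+: e') ∨ (p ++ [false] <+: e ∧ p ++ [true] <+: e')
  | [], [], _, h => absurd rfl h
  | [], _ :: _, h, _ => by simp at h
  | _ :: _, [], h, _ => by simp at h
  | b :: e, b' :: e', h, hne => by
    by_cases hb : b = b'
    · subst hb
      obtain ⟨p, hp⟩ := first_diff e e' (by simpa using h) (by simpa using hne)
      exact ⟨b :: p, by simpa using hp⟩
    · refine ⟨[], ?_⟩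
      cases b <;> cases b' <;> simp at hb ⊢

structure Inv (μ : Measure (EuclideanSpace ℝ (Fin d))) (k : ℕ)
    (z : List Bool → (EuclideanSpace ℝ (Fin d) →ᵃ[ℝ] ℝ)) : Prop where
  one : ∀ p : List Bool, p.length < k → ∀ j : Fin d, j.val = p.length →
    (z p).linear (EuclideanSpace.single j 1) = 1
  zero : ∀ p : List Bool, p.length < k → ∀ j : Fin d, p.length < j.val →
    (z p).linear (EuclideanSpace.single j 1) = 0
  meas : ∀ e : List Bool, e.length = k → μ.real (cell z e) = μ.real Set.univ / 2 ^ k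
  coor : ∀ j : Fin d, j.val < k → ∃ (c : ℝ) (b : List Bool → ℝ), ∀ e : List Bool, e.length = k →
    coord j = AffineMap.const ℝ _ c + ps b z e

theorem Inv.null {μ : Measure (EuclideanSpace ℝ (Fin d))} {k : ℕ}
    {z : List Bool → (EuclideanSpace ℝ (Fin d) →ᵃ[ℝ] ℝ)} (h : Inv μ k z) (hk : k ≤ d)
    (p : List Bool) (hp : p.length < k) : volume {x | z p x = 0} = 0 := by
  apply null_affine _ (EuclideanSpace.single (⟨p.length, by omega⟩ : Fin d) 1)
  rw [h.one p hp _ rfl]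
  exact one_ne_zero

theorem cell_inter {μ : Measure (EuclideanSpace ℝ (Fin d))} {k : ℕ}
    {z : List Bool → (EuclideanSpace ℝ (Fin d) →ᵃ[ℝ] ℝ)} (h : Inv μ k z) (hk : k ≤ d)
    (e e' : List Bool) (he : e.length = k) (he' : e'.length = k) (hne : e ≠ e') :
    Disjoint (interior (cell z e)) (interior (cell z e')) := by
  obtain ⟨p, hp⟩ := first_diff e e' (he.trans he'.symm) hne
  have hpk : p.length < k := by
    rcases hp with hp | hp
    · exact he ▸ len_of_prefix hp.1
    · exact he ▸ len_of_prefix hp.1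
  rw [Set.disjoint_iff_inter_eq_empty]
  have hopen : IsOpen (interior (cell z e) ∩ interior (cell z e')) :=
    isOpen_interior.inter isOpen_interior
  rw [← hopen.measure_eq_zero_iff volume]
  refine measure_mono_null ?_ (h.null hk p hpk)
  rintro x ⟨hx, hx'⟩
  have hx := interior_subset hx
  have hx' := interior_subset hx'
  show z p x = 0
  rcases hp with hp | hp
  · have h1 := hx _ _ hp.1
    have h2 := hx' _ _ hp.2
    simp [sg] at h1 h2
    linarith
  · have h1 := hx _ _ hp.1
    have h2 := hx' _ _ hp.2
    simp [sg] at h1 h2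
    linarith

theorem step (μ : Measure (EuclideanSpace ℝ (Fin d))) [IsFiniteMeasure μ] (hac : μ ≪ volume)
    (k : ℕ) (hk : k < d) (z : List Bool → (EuclideanSpace ℝ (Fin d) →ᵃ[ℝ] ℝ)) (h : Inv μ k z) :
    ∃ z', Inv μ (k + 1) z' := by
  let K : Fin d := ⟨k, hk⟩
  obtain ⟨c, a, hca⟩ : ∃ (c : ℝ) (a : List Bool → ℝ), ∀ e : List Bool, e.length = k →
      WB (μ.restrict (cell z e)) (fun x => coord K x - c - ps a (fun p => ⇑(z p)) e x) := by
    by_cases hμ : μ = 0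
    · refine ⟨0, 0, fun e he => ?_⟩
      subst hμ
      simp [WB]
    · have hcont : ∀ g : EuclideanSpace ℝ (Fin d) →ᵃ[ℝ] ℝ, Continuous g := fun g =>
        AffineMap.continuous_of_finiteDimensional g
      have hbd : ∀ (g : EuclideanSpace ℝ (Fin d) →ᵃ[ℝ] ℝ) (n : ℕ),
          ∃ C, ∀ x ∈ Metric.closedBall (0 : EuclideanSpace ℝ (Fin d)) n, |g x| ≤ C :=
        fun g n => (isCompact_closedBall _ _).exists_bound_of_continuousOn (hcont g).continuousOn
      refine stage k (fun e => μ.restrict (cell z e)) (fun p => ⇑(z p)) (coord K)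
        (fun e he => inferInstance) ?_ (fun p => (hcont _).measurable) (hcont _).measurable
        (fun n => Metric.closedBall 0 n) (fun n => measurableSet_closedBall) ?_ ?_
        (fun n p => hbd _ n) (fun n => hbd _ n) ?_
      · intro e he h0
        rw [Measure.restrict_eq_zero] at h0
        have h1 := h.meas e he
        rw [measureReal_def, h0] at h1
        have hM : 0 < μ.real Set.univ := by
          rw [measureReal_def, ENNReal.toReal_pos_iff]
          exact ⟨by simpa [pos_iff_ne_zero] using hμ, measure_lt_top _ _⟩
        have : 0 < μ.real Set.univ / 2 ^ k := by positivity
        rw [← h1] at this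
        simp at this
      · intro m n hmn
        exact Metric.closedBall_subset_closedBall (by exact_mod_cast hmn)
      · intro x
        obtain ⟨n, hn⟩ := exists_nat_ge ‖x‖
        exact ⟨n, by simpa using hn⟩
      · intro e he p b hp
        have h1 : ∀ᵐ x ∂μ, z p x ≠ 0 := by
          rw [ae_iff]
          simpa using hac (h.null hk.le p (he ▸ len_of_prefix hp))
        filter_upwards [ae_restrict_of_ae h1, ae_restrict_mem (cell_closed z e).measurableSet]
          with x h2 h3
        refine lt_of_le_of_ne (h3 p b hp) (Ne.symm (mul_ne_zero ?_ h2))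
        cases b <;> simp [sg]
  let z' : List Bool → (EuclideanSpace ℝ (Fin d) →ᵃ[ℝ] ℝ) := fun p =>
    if p.length < k then z p else coord K - AffineMap.const ℝ _ c - ps a z p
  have hlt : ∀ p : List Bool, p.length < k → z' p = z p := fun p hp => by simp [z', hp]
  have heq : ∀ p : List Bool, p.length = k → z' p = coord K - AffineMap.const ℝ _ c - ps a z p :=
    fun p hp => by simp [z', hp]
  have hlin : ∀ p : List Bool, p.length = k → ∀ j : Fin d, k ≤ j.val →
      (z' p).linear (EuclideanSpace.single j 1) = (EuclideanSpace.single j (1 : ℝ)) K := by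
    intro p hp j hj
    rw [heq p hp]
    have h1 : (ps a z p).linear (EuclideanSpace.single j 1) = 0 := by
      have h2 := ps_map (dirL (EuclideanSpace.single j 1)) a z p
      have h3 : ps a (fun p => dirL (EuclideanSpace.single j 1) (z p)) p
          = ps a (fun _ => (0 : ℝ →ₗ[ℝ] ℝ) 0) p := by
        refine ps_congr _ _ _ _ _ fun q hq => ⟨rfl, ?_⟩
        rw [hp] at hq
        exact h.zero q hq j (by omega)
      exact h2.symm.trans (h3.trans (ps_map (0 : ℝ →ₗ[ℝ] ℝ) a (fun _ => 0) p))
    show (coord K).linear _ - (AffineMap.const ℝ _ c).linear _ - (ps a z p).linear _ = _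
    rw [h1, coord_linear]
    simp
  have hone : ∀ p : List Bool, p.length < k + 1 → ∀ j : Fin d, j.val = p.length →
      (z' p).linear (EuclideanSpace.single j 1) = 1 := by
    intro p hp j hj
    rcases Nat.lt_succ_iff_lt_or_eq.1 hp with hp | hp
    · rw [hlt p hp]; exact h.one p hp j hj
    · rw [hlin p hp j (by omega)]
      have : j = K := Fin.ext (by simp [K]; omega)
      simp [this]
  refine ⟨z', hone, ?_, ?_, ?_⟩
  · intro p hp j hj
    rcases Nat.lt_succ_iff_lt_or_eq.1 hp with hp | hp
    · rw [hlt p hp]; exact h.zero p hp j hj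
    · rw [hlin p hp j (by omega)]
      have : K ≠ j := fun h => by simp [← h, K] at hj; omega
      simp [this]
  · intro e' he'
    obtain ⟨e, b, rfl⟩ : ∃ e b, e' = e ++ [b] :=
      (List.eq_nil_or_concat e').resolve_left (by rintro rfl; simp at he') |>.imp
        fun e ⟨b, hb⟩ => ⟨b, by simpa using hb⟩
    have he : e.length = k := by simpa using he'
    have hcell : cell z' e = cell z e := cell_congr _ _ _ fun p hp => hlt p (he ▸ hp)
    rw [cell_append, hcell]
    have hw : WB (μ.restrict (cell z e)) (z' e) := by
      refine (hca e he).congr (Eventually.of_forall fun x => ?_)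
      rw [heq e he, ps_eval]
      simp
    have hm := h.meas e he
    set ν := μ.restrict (cell z e) with hν
    have hu : ν.real Set.univ = μ.real Set.univ / 2 ^ k := by
      rw [hν, measureReal_restrict_apply' (cell_closed z e).measurableSet, Set.univ_inter, hm]
    have hnull : ∀ᵐ x ∂ν, z' e x ≠ 0 := by
      apply ae_restrict_of_ae
      rw [ae_iff]
      have := null_affine (z' e) (EuclideanSpace.single K 1)
        (by rw [hone e (by omega) K he.symm]; exact one_ne_zero)
      simpa using hac this
    have hmz : Measurable (z' e) := (AffineMap.continuous_of_finiteDimensional (z' e)).measurable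
    rw [← measureReal_restrict_apply' (cell_closed z e).measurableSet, ← hν, pow_succ, ← div_div,
      ← hu]
    have hpos : ν.real {x | 0 ≤ z' e x} = ν.real {x | 0 < z' e x} := by
      apply measureReal_congr
      filter_upwards [hnull] with x hx
      exact propext ⟨fun h => lt_of_le_of_ne h (Ne.symm hx), fun h => le_of_lt h⟩
    have hneg : ν.real {x | z' e x ≤ 0} = ν.real {x | z' e x < 0} := by
      apply measureReal_congr
      filter_upwards [hnull] with x hx
      exact propext ⟨fun h => lt_of_le_of_ne h hx, fun h => le_of_lt h⟩
    have hc1 := measureReal_compl (μ := ν) (measurableSet_lt measurable_const hmz :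
      MeasurableSet {x | 0 < z' e x})
    have hc2 : {x | 0 < z' e x}ᶜ = {x | z' e x ≤ 0} := by ext x; simp
    rw [hc2] at hc1
    have := hw.1
    have := hw.2
    cases b
    · have : {x | 0 ≤ sg false * z' e x} = {x | z' e x ≤ 0} := by ext x; simp [sg]
      rw [this]
      linarith
    · have : {x | 0 ≤ sg true * z' e x} = {x | 0 ≤ z' e x} := by ext x; simp [sg]
      rw [this]
      linarith
  · intro j hj
    have hsplit : ∀ e' : List Bool, e'.length = k + 1 → ∃ e b, e.length = k ∧ e' = e ++ [b] := by
      intro e' he'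
      obtain ⟨e, b, hb⟩ := (List.eq_nil_or_concat e').resolve_left (by rintro rfl; simp at he')
      refine ⟨e, b, ?_, by simpa using hb⟩
      rw [hb] at he'; simpa using he'
    rcases Nat.lt_succ_iff_lt_or_eq.1 hj with hj | hj
    · obtain ⟨c', b', hb'⟩ := h.coor j hj
      refine ⟨c', fun p => if p.length < k then b' p else 0, fun e' he' => ?_⟩
      obtain ⟨e, b, he, rfl⟩ := hsplit e' he'
      rw [ps_append, hb' e he, ps_congr _ b' z' z e]
      · simp [he]
      · intro p hp
        rw [he] at hp
        exact ⟨by simp [hp], hlt p hp⟩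
    · refine ⟨c, fun p => if p.length < k then a p else 1, fun e' he' => ?_⟩
      obtain ⟨e, b, he, rfl⟩ := hsplit e' he'
      rw [ps_append, ps_congr _ a z' z e]
      · have : j = K := Fin.ext hj
        rw [this, heq e he]
        simp [he]
      · intro p hp
        rw [he] at hp
        exact ⟨by simp [hp], hlt p hp⟩

theorem exists_inv (μ : Measure (EuclideanSpace ℝ (Fin d))) [IsFiniteMeasure μ] (hac : μ ≪ volume)
    (k : ℕ) (hk : k ≤ d) : ∃ z, Inv μ k z := by
  induction k with
  | zero =>
    refine ⟨fun _ => 0, fun p hp => by simp at hp, fun p hp => by simp at hp, fun e he => ?_,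
      fun j hj => by simp at hj⟩
    obtain rfl := List.length_eq_zero_iff.1 he
    have : cell (fun _ => (0 : EuclideanSpace ℝ (Fin d) →ᵃ[ℝ] ℝ)) [] = Set.univ :=
      Set.eq_univ_of_forall fun x p b hp => by simp at hp
    simp [this]
  | succ k ih =>
    obtain ⟨z, hz⟩ := ih (by omega)
    exact step μ hac k (by omega) z hz

theorem interior_lt (s : Set (EuclideanSpace ℝ (Fin d))) (w : EuclideanSpace ℝ (Fin d))
    (hw : w ≠ 0) (α : ℝ) (h : ∀ y ∈ s, α ≤ ⟪y, w⟫) (x : EuclideanSpace ℝ (Fin d))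
    (hx : x ∈ interior s) : α < ⟪x, w⟫ := by
  have hc : Tendsto (fun t : ℝ => x - t • w) (𝓝[>] 0) (𝓝 x) := by
    have : Continuous fun t : ℝ => x - t • w := by fun_prop
    have := this.tendsto 0
    simp only [zero_smul, sub_zero] at this
    exact this.mono_left nhdsWithin_le_nhds
  have h1 := hc.eventually (mem_interior_iff_mem_nhds.1 hx)
  obtain ⟨t, ht, ht0⟩ := (h1.and self_mem_nhdsWithin).exists
  have ht0 : 0 < t := ht0
  have h2 := h _ ht
  rw [inner_sub_left, real_inner_smul_left] at h2
  have h3 : 0 < ⟪w, w⟫ := real_inner_self_pos.2 hw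
  have := mul_pos ht0 h3
  linarith

end main
end YY

/-- The Yao–Yao theorem: an equipartition into `2^d` convex parts such that no
hyperplane meets the interior of every part. -/
theorem yao_yao (d : ℕ) (hd : 0 < d)
    (μ : Measure (EuclideanSpace ℝ (Fin d)))
    (hfin : IsFiniteMeasure μ) (hac : μ ≪ volume) :
    ∃ C : Fin (2 ^ d) → Set (EuclideanSpace ℝ (Fin d)),
      (∀ j, IsClosed (C j)) ∧ (∀ j, Convex ℝ (C j)) ∧
      (⋃ j, C j) = Set.univ ∧
      (∀ j j', j ≠ j' → Disjoint (interior (C j)) (interior (C j'))) ∧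
      (∀ j, μ (C j) = μ Set.univ / 2 ^ d) ∧
      ∀ (v : EuclideanSpace ℝ (Fin d)) (α : ℝ), v ≠ 0 →
        ∃ j, interior (C j) ∩ {x | ⟪x, v⟫ = α} = ∅ := by
  obtain ⟨z, hz⟩ := YY.exists_inv μ hac d le_rfl
  have hcard : Fintype.card (List.Vector Bool d) = 2 ^ d := by simp
  let φ : Fin (2 ^ d) ≃ List.Vector Bool d := (Fintype.equivFinOfCardEq hcard).symm
  have hsurj : ∀ e : List Bool, e.length = d → ∃ j, (φ j).toList = e := fun e he =>
    ⟨φ.symm ⟨e, he⟩, congrArg List.Vector.toList (φ.apply_symm_apply (⟨e, he⟩ : List.Vector Bool d))⟩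
  refine ⟨fun j => YY.cell z (φ j).toList, fun j => YY.cell_closed _ _,
    fun j => YY.cell_convex _ _, ?_, ?_, ?_, ?_⟩
  · refine Set.eq_univ_of_forall fun x => ?_
    obtain ⟨e, he, hx⟩ := YY.cell_cover z d x
    obtain ⟨j, rfl⟩ := hsurj e he
    exact Set.mem_iUnion.2 ⟨j, hx⟩
  · intro j j' hj
    refine YY.cell_inter hz le_rfl _ _ (by simp) (by simp) fun h => hj ?_
    exact φ.injective (List.Vector.toList_injective h)
  · intro j
    have h1 := hz.meas (φ j).toList (by simp)
    rw [measureReal_def, measureReal_def] at h1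
    rw [← ENNReal.toReal_eq_toReal_iff' (measure_ne_top _ _)
      (ENNReal.div_ne_top (measure_ne_top _ _) (by simp)), h1]
    simp
  · intro v α hv
    have hco : ∀ j : Fin d, _ := fun j => hz.coor j j.2
    choose c b hcb using hco
    have hlin : ∀ e : List Bool, e.length = d → ∀ x : EuclideanSpace ℝ (Fin d),
        ⟪x, v⟫ = ∑ j, v j * c j + YY.ps (fun p => ∑ j, v j * b j p) (fun p => ⇑(z p)) e x := by
      intro e he x
      rw [YY.ps_sum, PiLp.inner_apply, Finset.sum_apply, ← Finset.sum_add_distrib]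
      refine Finset.sum_congr rfl fun j _ => ?_
      have h1 : x j = c j + YY.ps (b j) z e x :=
        congrArg (fun g : EuclideanSpace ℝ (Fin d) →ᵃ[ℝ] ℝ => g x) (hcb j e he)
      rw [Pi.smul_apply, YY.ps_eval, smul_eq_mul, ← mul_add, ← h1]
      simp
    have hsgn : ∀ e : List Bool, e.length = d → ∀ p b, p ++ [b] <+: e →
        ∀ᶠ x in Filter.principal (YY.cell z e), 0 ≤ YY.sg b * z p x := by
      intro e he p b hp
      rw [Filter.eventually_principal]
      exact fun x hx => hx p b hp
    rcases le_total α (∑ j, v j * c j) with hα | hα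
    · obtain ⟨e, he, h⟩ := YY.exists_nonneg d (fun p => ⇑(z p))
        (fun e => Filter.principal (YY.cell z e)) hsgn (fun p => ∑ j, v j * b j p)
      rw [Filter.eventually_principal] at h
      obtain ⟨j, rfl⟩ := hsurj e he
      refine ⟨j, Set.eq_empty_of_forall_notMem ?_⟩
      rintro x ⟨hx, hx2⟩
      have hx2 : ⟪x, v⟫ = α := hx2
      have := YY.interior_lt _ v hv α (fun y hy => by
        have := h y hy
        rw [hlin _ he y]; linarith) x hx
      linarith
    · obtain ⟨e, he, h⟩ := YY.exists_nonneg d (fun p => ⇑(z p))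
        (fun e => Filter.principal (YY.cell z e)) hsgn (fun p => (-1) * ∑ j, v j * b j p)
      rw [Filter.eventually_principal] at h
      obtain ⟨j, rfl⟩ := hsurj e he
      refine ⟨j, Set.eq_empty_of_forall_notMem ?_⟩
      rintro x ⟨hx, hx2⟩
      have hx2 : ⟪x, v⟫ = α := hx2
      have := YY.interior_lt _ (-v) (neg_ne_zero.2 hv) (-α) (fun y hy => by
        have := h y hy
        rw [YY.ps_smul, Pi.smul_apply, smul_eq_mul] at this
        rw [inner_neg_right, hlin _ he y]; linarith) x hx
      rw [inner_neg_right] at this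
      linarith
end

section
/- Let d be a positive integer and let X be a finite set of points in ℝ^d. Then there exists a point p ∈ ℝ^d such that every closed half-space containing p contains at least |X|/(d+1) points of X. -/
open MeasureTheory
open scoped RealInnerProductSpace

/-- Rado's centerpoint theorem. -/
theorem centerpoint (d : ℕ) (hd : 0 < d)
    (X : Finset (EuclideanSpace ℝ (Fin d))) :
    ∃ p : EuclideanSpace ℝ (Fin d),
      ∀ (v : EuclideanSpace ℝ (Fin d)) (α : ℝ), v ≠ 0 →
        ⟪p, v⟫ ≤ α →
        (X.card : ℝ) / (d + 1)
          ≤ (((↑X : Set (EuclideanSpace ℝ (Fin d))) ∩ {x | ⟪x, v⟫ ≤ α}).ncard : ℝ) := by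
  classical
  have key : (⋂ S ∈ X.powerset.filter (fun S => (X \ S).card * (d + 1) < X.card),
      convexHull ℝ (S : Set (EuclideanSpace ℝ (Fin d)))).Nonempty := by
    apply Convex.helly_theorem' (𝕜 := ℝ)
    · intro S _
      exact convex_convexHull ℝ _
    · intro I hI hc
      rw [finrank_euclideanSpace_fin] at hc
      rcases I.eq_empty_or_nonempty with rfl | hne
      · simp
      by_contra hcon
      have hsub : X ⊆ I.biUnion (fun S => X \ S) := by
        intro x hx
        by_contra hx2
        apply hcon
        refine ⟨x, Set.mem_iInter₂.2 fun S hS => subset_convexHull ℝ _ ?_⟩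
        by_contra hxS
        exact hx2 (Finset.mem_biUnion.2 ⟨S, hS, Finset.mem_sdiff.2 ⟨hx, hxS⟩⟩)
      have h1 : X.card ≤ ∑ S ∈ I, (X \ S).card :=
        (Finset.card_le_card hsub).trans Finset.card_biUnion_le
      have h2 : ∑ S ∈ I, (X \ S).card * (d + 1) < ∑ S ∈ I, X.card :=
        Finset.sum_lt_sum_of_nonempty hne fun S hS => (Finset.mem_filter.1 (hI hS)).2
      rw [← Finset.sum_mul, Finset.sum_const, smul_eq_mul] at h2
      have h3 := Nat.mul_le_mul_right X.card hc
      have h4 := Nat.mul_le_mul_right (d + 1) h1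
      rw [Nat.mul_comm] at h4
      omega
  obtain ⟨p, hp⟩ := key
  refine ⟨p, fun v α _ hpv => ?_⟩
  have hset : ((↑X : Set (EuclideanSpace ℝ (Fin d))) ∩ {x | ⟪x, v⟫ ≤ α})
      = ↑(X.filter fun x => ⟪x, v⟫ ≤ α) := by
    ext x; simp
  rw [hset, Set.ncard_coe_finset, div_le_iff₀ (by positivity)]
  by_contra hlt
  push Not at hlt
  have hlt' : (X.filter fun x => ⟪x, v⟫ ≤ α).card * (d + 1) < X.card := by exact_mod_cast hlt
  have hmem := Set.mem_iInter₂.1 hp (X \ X.filter fun x => ⟪x, v⟫ ≤ α) (by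
    rw [Finset.mem_filter, Finset.mem_powerset,
      Finset.sdiff_sdiff_eq_self (Finset.filter_subset _ _)]
    exact ⟨Finset.sdiff_subset, hlt'⟩)
  have hconv : Convex ℝ {x : EuclideanSpace ℝ (Fin d) | α < ⟪x, v⟫} :=
    convex_halfSpace_gt ⟨fun x y => inner_add_left x y v,
      fun c x => by simp [inner_smul_left]⟩ α
  have hin := convexHull_min (s := ((X \ X.filter fun x => ⟪x, v⟫ ≤ α : Finset _) :
      Set (EuclideanSpace ℝ (Fin d)))) (by
    intro x hx
    rw [Finset.mem_coe, Finset.mem_sdiff, Finset.mem_filter] at hx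
    by_contra h
    exact hx.2 ⟨hx.1, not_lt.1 h⟩) hconv hmem
  exact absurd hpv (not_le.2 hin)
end

section
/- Let k and d be non-negative integers with k ≤ d − 1, and let μ₁, …, μ_{k+1} be probability measures on ℝ^d, each absolutely continuous with respect to the Lebesgue measure. Then there exists a k-dimensional affine subspace V of ℝ^d such that for every closed half-space H with V ⊆ H and every i = 1, …, k + 1, one has μ_i(H) ≥ 1/(d − k + 1). -/
namespace CT
open Finset

section Cochain
variable {X : Type*}

def skip (i : ℕ) (v : ℕ → X) : ℕ → X := fun j => if j < i then v j else v (j + 1)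

def Phi (s : ℕ → X → ZMod 2) (n : ℕ) (v : ℕ → X) : ZMod 2 :=
  ∏ a ∈ range n, (s a (v a) + s a (v (a + 1)))

lemma Phi_succ (s : ℕ → X → ZMod 2) (n : ℕ) (v : ℕ → X) :
    Phi s (n + 1) v = (s 0 (v 0) + s 0 (v 1)) *
      Phi (fun a => s (a + 1)) n (fun a => v (a + 1)) := by
  simp only [Phi, prod_range_succ', mul_comm]

lemma skip_zero (v : ℕ → X) : skip 0 v = fun a => v (a + 1) := by
  funext j; simp [skip]

lemma skip_succ_shift (i : ℕ) (v : ℕ → X) :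
    (fun a => skip (i + 1) v (a + 1)) = skip i (fun a => v (a + 1)) := by
  funext j; simp [skip]

lemma skip_succ_zero (i : ℕ) (v : ℕ → X) : skip (i + 1) v 0 = v 0 := by simp [skip]

lemma skip_two_one (i : ℕ) (v : ℕ → X) : skip (i + 2) v 1 = v 1 := by simp [skip]

lemma skip_one_one (v : ℕ → X) : skip 1 v 1 = v 2 := by simp [skip]

lemma two_z (x : ZMod 2) : x + x = 0 := CharTwo.add_self_eq_zero x

/-- Generic step: prefixing a coboundary of a 0-cochain. -/
lemma delta_step (s : X → ZMod 2) (F : (ℕ → X) → ZMod 2) (n : ℕ) (v : ℕ → X) :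
    ∑ i ∈ range (n + 2), (s (skip i v 0) + s (skip i v 1)) * F (fun a => skip i v (a + 1))
      = (s (v 0) + s (v 1)) * ∑ i ∈ range (n + 1), F (skip i (fun a => v (a + 1))) := by
  rw [sum_range_succ', sum_range_succ', sum_range_succ']
  simp only [skip_succ_shift, skip_succ_zero, skip_two_one, skip_zero, zero_add, skip_one_one]
  rw [mul_add, mul_sum, add_assoc]
  congr 1
  have := two_z (s (v 2))
  linear_combination (F (fun a => v (a+1+1))) * this

lemma delta_Phi (n : ℕ) : ∀ (s : ℕ → X → ZMod 2) (v : ℕ → X),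
    ∑ i ∈ range (n + 2), Phi s n (skip i v) = 0 := by
  induction n with
  | zero => intro s v; simp [Phi]; decide
  | succ n ih =>
    intro s v
    simp only [Phi_succ]
    rw [delta_step (s 0) (fun w => Phi (fun a => s (a + 1)) n w) (n + 1) v, ih, mul_zero]

def Psi (s : ℕ → X → ZMod 2) (u : X → ZMod 2) (b c : ℕ) (v : ℕ → X) : ZMod 2 :=
  Phi s b v * (u (v b) * Phi (fun a => s (a + b + 1)) c (fun a => v (a + b)))

lemma delta_Psi (u : X → ZMod 2) (c b : ℕ) : ∀ (s : ℕ → X → ZMod 2) (v : ℕ → X),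
    ∑ i ∈ range (b + c + 2), Psi s u b c (skip i v) =
      Phi s b v * ((u (v b) + u (v (b + 1))) *
        Phi (fun a => s (a + b + 1)) c (fun a => v (a + b + 1))) := by
  induction b with
  | zero =>
    intro s v
    have h := delta_Phi c (fun a => s (a + 1)) v
    have P0 : ∀ w : ℕ → X, Phi s 0 w = 1 := fun w => by simp [Phi]
    simp only [Psi, P0, one_mul, zero_add, add_zero]
    change ∑ i ∈ range (c + 2), u (skip i v 0) * Phi (fun a => s (a + 1)) c (skip i v) = 
      (u (v 0) + u (v 1)) * Phi (fun a => s (a+1)) c (fun a => v (a + 1))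
    rw [sum_range_succ'] at h ⊢
    simp only [skip_succ_zero, ← mul_sum]
    rw [skip_zero] at h ⊢
    have h2 := two_z (u (v 0) * Phi (fun a => s (a+1)) c (fun a => v (a + 1)))
    simp only [zero_add]
    linear_combination u (v 0) * h - h2
  | succ b ih =>
    intro s v
    have e : ∀ w : ℕ → X, Psi s u (b + 1) c w = (s 0 (w 0) + s 0 (w 1)) *
        Psi (fun a => s (a + 1)) u b c (fun a => w (a + 1)) := by
      intro w
      simp only [Psi, Phi_succ, mul_assoc, add_assoc]
    simp only [e]
    rw [show b + 1 + c + 2 = (b + c + 1) + 2 by ring,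
      delta_step (s 0) (fun w => Psi (fun a => s (a + 1)) u b c w) (b + c + 1) v]
    rw [show b + c + 1 + 1 = b + c + 2 by ring, ih, Phi_succ]
    simp only [mul_assoc, add_assoc]

/-- replacing the b-th function by `u`. -/
lemma Phi_update (s : ℕ → X → ZMod 2) (u : X → ZMod 2) (b c : ℕ) (v : ℕ → X) :
    Phi (Function.update s b u) (b + c + 1) v =
      Phi s b v * ((u (v b) + u (v (b + 1))) *
        Phi (fun a => s (a + b + 1)) c (fun a => v (a + b + 1))) := by
  simp only [Phi]
  rw [show b + c + 1 = (b + 1) + c by ring, prod_range_add, prod_range_succ, mul_assoc]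
  congr 1
  · refine prod_congr rfl fun a ha => ?_
    have : a ≠ b := (mem_range.1 ha).ne
    simp [this]
  · congr 1
    · simp
    · refine prod_congr rfl fun a ha => ?_
      have : b + 1 + a ≠ b := by omega
      rw [Function.update_of_ne this]
      rw [show b + 1 + a = a + b + 1 by ring, show a + b + 1 + 1 = a + 1 + b + 1 by ring]

end Cochain
end CT

namespace CT
open Finset

section Box
variable {ι : Type*} [Fintype ι] [DecidableEq ι] {n : ℕ}

def Ev (t : ℤ) : ℤ := t + t % 2
def Od (t : ℤ) : ℤ := t + 1 - t % 2

def vtx (σ : (ι → ℤ) × (Fin n ≃ ι)) (i : ℕ) : ι → ℤ :=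
  fun a => if (σ.2.symm a : ℕ) < i then Od (σ.1 a) else Ev (σ.1 a)

noncomputable def box (ι : Type*) [Fintype ι] [DecidableEq ι] (L : ℤ) : Finset (ι → ℤ) :=
  Fintype.piFinset (fun _ => Finset.Ico 0 L)

noncomputable def simps (ι : Type*) [Fintype ι] [DecidableEq ι] (n : ℕ) (L : ℤ) :
    Finset ((ι → ℤ) × (Fin n ≃ ι)) := box ι L ×ˢ univ

def rfl' (L : ℤ) (R : Finset ι) (p : ι → ℤ) : ι → ℤ := fun a => if a ∈ R then L - p a else p a

lemma mem_simps {L : ℤ} {σ : (ι → ℤ) × (Fin n ≃ ι)} :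
    σ ∈ simps ι n L ↔ ∀ a, 0 ≤ σ.1 a ∧ σ.1 a < L := by
  simp [simps, box]

lemma vtx_mem {L : ℤ} {σ : (ι → ℤ) × (Fin n ≃ ι)} (hσ : σ ∈ simps ι n L) (hL : L % 2 = 0)
    (i : ℕ) (a : ι) : 0 ≤ vtx σ i a ∧ vtx σ i a ≤ L := by
  have := mem_simps.1 hσ a
  simp only [vtx, Ev, Od]
  split_ifs <;> omega

lemma sum_skip (L : ℤ) (hL : L % 2 = 0) (R : ι → Finset ι) (hR : ∀ a, a ∈ R a)
    (F : (ℕ → ι → ℤ) → ZMod 2)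
    (hF : ∀ v v' : ℕ → ι → ℤ, (∀ j < n, v j = v' j) → F v = F v')
    (hFR : ∀ a, ∀ v : ℕ → ι → ℤ, (∀ j < n, v j a = 0 ∨ v j a = L) →
      (∀ j < n, ∀ b, 0 ≤ v j b ∧ v j b ≤ L) → F (fun j => rfl' L (R a) (v j)) = F v)
    (hn : 0 < n) (i : ℕ) (hi : i ≤ n) :
    ∑ σ ∈ simps ι n L, F (skip i (vtx σ)) = 0 := by
  rcases Nat.eq_zero_or_pos i with rfl | hi0
  · -- drop first
    refine sum_involution (fun σ _ => (Function.update σ.1 (σ.2 ⟨0, hn⟩)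
      (σ.1 (σ.2 ⟨0, hn⟩) + 1 - 2 * (σ.1 (σ.2 ⟨0, hn⟩) % 2)), σ.2)) ?_ ?_ ?_ ?_
    · intro σ hσ
      rw [← two_z (F (skip 0 (vtx σ)))]
      congr 1
      refine hF _ _ fun j hj => ?_
      funext a
      simp only [skip_zero]
      by_cases h : a = σ.2 ⟨0, hn⟩
      · subst h; simp [vtx, Od]; omega
      · simp [vtx, h]
    · intro σ hσ _ h
      have := congrFun (congrArg Prod.fst h) (σ.2 ⟨0, hn⟩)
      simp at this; omega
    · intro σ hσ
      rw [mem_simps] at hσ ⊢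
      intro a
      have := hσ a
      by_cases h : a = σ.2 ⟨0, hn⟩
      · subst h; simp; omega
      · simpa [h] using this
    · intro σ hσ
      refine Prod.ext ?_ rfl
      funext a
      by_cases h : a = σ.2 ⟨0, hn⟩
      · subst h; simp; omega
      · simp [h]
  rcases Nat.lt_or_ge i n with hin | hin
  · -- middle
    have hi1 : i - 1 < n := by omega
    let sw : Equiv.Perm (Fin n) := Equiv.swap ⟨i - 1, hi1⟩ ⟨i, hin⟩
    have hsw : ∀ x : Fin n, ∀ j : ℕ, j ≠ i → ((sw x : ℕ) < j ↔ (x : ℕ) < j) := by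
      intro x j hj
      simp only [sw, Equiv.swap_apply_def]
      split_ifs with h1 h2
      · subst h1; simp; omega
      · subst h2; simp; omega
      · rfl
    refine sum_involution (fun σ _ => (σ.1, sw.trans σ.2)) ?_ ?_ ?_ ?_
    · intro σ hσ
      rw [← two_z (F (skip i (vtx σ)))]
      congr 1
      refine hF _ _ fun j hj => ?_
      funext a
      have hs : ((sw.trans σ.2).symm a) = sw (σ.2.symm a) := by
        simp [sw]
      simp only [skip]
      by_cases h : j < i
      · simp only [h, if_true]; simp only [vtx, hs, hsw _ _ h.ne]
      · simp only [h, if_false]; simp only [vtx, hs, hsw _ (j + 1) (show j + 1 ≠ i by omega)]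
    · intro σ hσ _ h
      have := congrArg (fun e : Fin n ≃ ι => e ⟨i, hin⟩) (congrArg Prod.snd h)
      simp [sw] at this
      omega
    · intro σ hσ
      rw [mem_simps] at hσ ⊢
      exact hσ
    · intro σ hσ
      refine Prod.ext rfl ?_
      ext x
      simp [sw]
  · have hin : i = n := le_antisymm hi hin
    subst hin
    have hl : i - 1 < i := by omega
    let la : (ι → ℤ) × (Fin i ≃ ι) → ι := fun σ => σ.2 ⟨i - 1, hl⟩
    let g : (ι → ℤ) × (Fin i ≃ ι) → (ι → ℤ) × (Fin i ≃ ι) := fun σ =>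
      if σ.1 (la σ) = 0 ∨ σ.1 (la σ) = L - 1 then
        (fun b => if b ∈ R (la σ) then L - 1 - σ.1 b else σ.1 b, σ.2)
      else (Function.update σ.1 (la σ) (σ.1 (la σ) - 1 + 2 * (σ.1 (la σ) % 2)), σ.2)
    have gpos : ∀ σ, (σ.1 (la σ) = 0 ∨ σ.1 (la σ) = L - 1) →
        (g σ).1 = fun b => if b ∈ R (la σ) then L - 1 - σ.1 b else σ.1 b := by
      intro σ h; simp only [g]; rw [if_pos h]
    have gneg : ∀ σ, ¬ (σ.1 (la σ) = 0 ∨ σ.1 (la σ) = L - 1) →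
        (g σ).1 = Function.update σ.1 (la σ) (σ.1 (la σ) - 1 + 2 * (σ.1 (la σ) % 2)) := by
      intro σ h; simp only [g]; rw [if_neg h]
    have gsnd : ∀ σ, (g σ).2 = σ.2 := by
      intro σ; simp only [g]; split_ifs <;> rfl
    have gla : ∀ σ, la (g σ) = la σ := by
      intro σ; simp only [la, gsnd]
    have hla : ∀ σ : (ι → ℤ) × (Fin i ≃ ι), ∀ j < i, ¬ ((σ.2.symm (la σ) : ℕ) < j) := by
      intro σ j hj; simp [la]; omega
    refine sum_involution (fun σ _ => g σ) ?_ ?_ ?_ ?_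
    · intro σ hσ
      rw [← two_z (F (skip i (vtx σ)))]
      congr 1
      have hm := mem_simps.1 hσ
      by_cases h : σ.1 (la σ) = 0 ∨ σ.1 (la σ) = L - 1
      · rw [← hFR (la σ) (skip i (vtx σ))]
        · refine hF _ _ fun j hj => ?_
          funext a
          simp only [skip, hj, if_true, vtx, gsnd, rfl']
          simp only [g, h, if_true]
          split_ifs <;> simp only [Od, Ev] <;> omega
        · intro j hj
          simp only [skip, hj, if_true, vtx, if_neg (hla σ j hj), Ev]
          omega
        · intro j hj b
          simp only [skip, hj, if_true]
          exact vtx_mem hσ hL j b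
      · refine hF _ _ fun j hj => ?_
        funext a
        simp only [skip, hj, if_true, vtx, gsnd]
        simp only [g, h, if_false]
        by_cases ha : a = la σ
        · subst ha
          simp only [if_neg (hla σ j hj), Ev, Function.update_self]
          omega
        · simp [ha]
    · intro σ hσ _ h
      have := congrFun (congrArg Prod.fst h) (la σ)
      simp only [g] at this
      split_ifs at this with h1
      · simp only [hR, if_true] at this; omega
      · simp at this; omega
    · intro σ hσ
      rw [mem_simps] at hσ ⊢
      intro a
      have h1 := hσ a
      simp only [g]
      split_ifs with h
      · simp only; split_ifs <;> omega
      · by_cases ha : a = la σ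
        · subst ha; simp; omega
        · simpa [ha] using h1
    · intro σ hσ
      rw [mem_simps] at hσ
      refine Prod.ext ?_ (by rw [gsnd, gsnd])
      funext a
      have h0 := hσ (la σ)
      by_cases h : σ.1 (la σ) = 0 ∨ σ.1 (la σ) = L - 1
      · have e1 : (g σ).1 = fun b => if b ∈ R (la σ) then L - 1 - σ.1 b else σ.1 b := by
          simp only [g, h, if_true]
        have h' : (g σ).1 (la σ) = 0 ∨ (g σ).1 (la σ) = L - 1 := by
          rw [e1]; simp only [hR, if_true]; omega
        have e2 : (g (g σ)).1 = fun b => if b ∈ R (la σ) then L - 1 - (g σ).1 b else (g σ).1 b := by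
          rw [gpos (g σ) (by rw [gla]; exact h'), gla]
        rw [e2, e1]
        simp only
        split_ifs <;> omega
      · have e1 : (g σ).1 = Function.update σ.1 (la σ) (σ.1 (la σ) - 1 + 2 * (σ.1 (la σ) % 2)) := by
          simp only [g, h, if_false]
        have h' : ¬ ((g σ).1 (la σ) = 0 ∨ (g σ).1 (la σ) = L - 1) := by
          rw [e1]; simp only [Function.update_self]; omega
        have e2 : (g (g σ)).1 = Function.update (g σ).1 (la σ)
            ((g σ).1 (la σ) - 1 + 2 * ((g σ).1 (la σ) % 2)) := by
          rw [gneg (g σ) (by rw [gla]; exact h'), gla]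
        rw [e2, e1]
        by_cases ha : a = la σ
        · subst ha; simp only [Function.update_self]; omega
        · simp [ha]

/-- `s` has character `χ` -/
def HasChar (L : ℤ) (R : ι → Finset ι) (s : (ι → ℤ) → ZMod 2) (χ : ι → ZMod 2) : Prop :=
  ∀ a, ∀ p : ι → ℤ, (p a = 0 ∨ p a = L) → (∀ b, 0 ≤ p b ∧ p b ≤ L) →
    s (rfl' L (R a) p) = s p + χ a

lemma sum_update (L : ℤ) (hL : L % 2 = 0) (R : ι → Finset ι) (hR : ∀ a, a ∈ R a)
    (s : ℕ → (ι → ℤ) → ZMod 2) (χ : ℕ → ι → ZMod 2) (hs : ∀ j, HasChar L R (s j) (χ j))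
    (u : (ι → ℤ) → ZMod 2) (hu : HasChar L R u 0) (b : ℕ) (hb : b < n) :
    ∑ σ ∈ simps ι n L, Phi (Function.update s b u) n (vtx σ) = 0 := by
  obtain ⟨c, rfl⟩ : ∃ c, n = b + c + 1 := ⟨n - b - 1, by omega⟩
  simp only [Phi_update, ← delta_Psi]
  rw [sum_comm]
  refine sum_eq_zero fun i hi => ?_
  refine sum_skip L hL R hR (Psi s u b c) ?_ ?_ (by omega) i (by have := mem_range.1 hi; omega)
  · intro v v' h
    simp only [Psi, Phi]
    congr 1
    · refine prod_congr rfl fun a ha => ?_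
      have := mem_range.1 ha
      rw [h a (by omega), h (a + 1) (by omega)]
    · rw [h b (by omega)]
      congr 1
      refine prod_congr rfl fun a ha => ?_
      have := mem_range.1 ha
      rw [h (a + b) (by omega), h (a + 1 + b) (by omega)]
  · intro a v h0 hb
    have key : ∀ q, ∀ j < b + c + 1, ∀ j' < b + c + 1,
        s q (rfl' L (R a) (v j)) + s q (rfl' L (R a) (v j')) = s q (v j) + s q (v j') := by
      intro q j hj j' hj'
      rw [hs q a _ (h0 j hj) (hb j hj), hs q a _ (h0 j' hj') (hb j' hj')]
      linear_combination two_z (χ q a)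
    simp only [Psi, Phi]
    congr 1
    · refine prod_congr rfl fun x ha => ?_
      have := mem_range.1 ha
      exact key _ _ (by omega) _ (by omega)
    · rw [hu a _ (h0 b (by omega)) (hb b (by omega))]
      simp only [Pi.zero_apply, add_zero]
      congr 1
      refine prod_congr rfl fun x ha => ?_
      have := mem_range.1 ha
      exact key _ _ (by omega) _ (by omega)

lemma Phi_add (s : ℕ → (ι → ℤ) → ZMod 2) (u : (ι → ℤ) → ZMod 2) (b : ℕ) (hb : b < n)
    (v : ℕ → ι → ℤ) :
    Phi (Function.update s b (s b + u)) n v = Phi s n v + Phi (Function.update s b u) n v := by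
  obtain ⟨c, rfl⟩ : ∃ c, n = b + c + 1 := ⟨n - b - 1, by omega⟩
  have h : Phi s (b + c + 1) v = Phi (Function.update s b (s b)) (b + c + 1) v := by simp
  rw [h]
  simp only [Phi_update, Pi.add_apply]
  ring

lemma sum_indep (L : ℤ) (hL : L % 2 = 0) (R : ι → Finset ι) (hR : ∀ a, a ∈ R a)
    (s s' : ℕ → (ι → ℤ) → ZMod 2) (χ : ℕ → ι → ZMod 2) (hs : ∀ j, HasChar L R (s j) (χ j))
    (hs' : ∀ j, HasChar L R (s' j) (χ j)) :
    ∑ σ ∈ simps ι n L, Phi s n (vtx σ) = ∑ σ ∈ simps ι n L, Phi s' n (vtx σ) := by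
  have key : ∀ b ≤ n, ∑ σ ∈ simps ι n L, Phi s n (vtx σ) =
      ∑ σ ∈ simps ι n L, Phi (fun j => if j < b then s' j else s j) n (vtx σ) := by
    intro b
    induction b with
    | zero => simp
    | succ b ih =>
      intro hb
      rw [ih (by omega)]
      set h : ℕ → (ι → ℤ) → ZMod 2 := fun j => if j < b then s' j else s j with hh
      have e : (fun j => if j < b + 1 then s' j else s j) =
          Function.update h b (h b + (s b + s' b)) := by
        funext j
        by_cases hj : j = b
        · subst hj
          simp only [Function.update_self, hh, lt_irrefl, if_false]
          funext p
          simp only [Nat.lt_succ_self, if_true, Pi.add_apply]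
          linear_combination - two_z (s j p)
        · simp only [Function.update_of_ne hj, hh]
          have : j < b + 1 ↔ j < b := by omega
          simp only [this]
      rw [e]
      simp only [Phi_add (n := n) h _ b (by omega)]
      rw [sum_add_distrib, sum_update L hL R hR h χ ?_ _ ?_ b (by omega), add_zero]
      · intro j
        simp only [hh]; split_ifs
        · exact hs' j
        · exact hs j
      · intro a p h1 h2
        simp only [Pi.add_apply, Pi.zero_apply, add_zero]
        rw [hs b a p h1 h2, hs' b a p h1 h2]
        linear_combination two_z (χ b a)
  rw [key n le_rfl]
  refine sum_congr rfl fun σ _ => ?_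
  simp only [Phi]
  refine prod_congr rfl fun a ha => ?_
  rw [if_pos (mem_range.1 ha)]

end Box
end CT

namespace CT
open Finset

def first : ℕ → (ℕ → Option (ZMod 2)) → ZMod 2
  | 0, _ => 0
  | n + 1, f => match f 0 with
    | some x => x
    | none => first n (fun i => f (i + 1))

lemma first_none (n : ℕ) : ∀ f : ℕ → Option (ZMod 2), (∀ l < n, f l = none) → first n f = 0 := by
  induction n with
  | zero => intro f _; rfl
  | succ n ih =>
    intro f h
    simp only [first, h 0 (by omega)]
    exact ih _ fun l hl => h (l + 1) (by omega)

lemma first_at (n : ℕ) : ∀ (f : ℕ → Option (ZMod 2)) (r : ℕ) (x : ZMod 2), r < n →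
    (∀ l < r, f l = none) → f r = some x → first n f = x := by
  induction n with
  | zero => intro f r x h; omega
  | succ n ih =>
    intro f r x hr h hx
    rcases r with _ | r
    · simp only [first, hx]
    · simp only [first, h 0 (by omega)]
      exact ih _ r x (by omega) (fun l hl => h (l + 1) (by omega)) hx

lemma first_flip (n : ℕ) : ∀ (f g : ℕ → Option (ZMod 2)) (i : ℕ), i < n →
    (f i).isSome → (∀ l ≤ i, g l = (f l).map (· + 1)) → first n g = first n f + 1 := by
  induction n with
  | zero => intro f g i h; omega
  | succ n ih =>
    intro f g i hi hs h
    have h0 := h 0 (by omega)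
    rcases hf : f 0 with _ | x
    · rw [hf] at h0
      simp only [first, hf, h0, Option.map_none]
      rcases i with _ | i
      · rw [hf] at hs; simp at hs
      · exact ih _ _ i (by omega) hs fun l hl => h (l + 1) (by omega)
    · rw [hf] at h0
      simp only [first, hf, h0, Option.map_some]

def bd (K x : ℤ) : Option (ZMod 2) := if x = 0 then some 0 else if x = 4 * K then some 1 else none
def md (K x : ℤ) : Option (ZMod 2) :=
  if x < 2 * K then some 0 else if 2 * K < x then some 1 else none

lemma bd_refl (K x : ℤ) (hK : 0 < K) : bd K (4 * K - x) = (bd K x).map (· + 1) := by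
  have : (1 : ZMod 2) + 1 = 0 := two_z 1
  unfold bd
  split_ifs <;> first | omega | simp [this]

lemma md_refl (K x : ℤ) : md K (4 * K - x) = (md K x).map (· + 1) := by
  have : (1 : ZMod 2) + 1 = 0 := two_z 1
  unfold md
  split_ifs <;> first | omega | simp [this]

section Canon
variable {m k : ℕ}

abbrev Idx (m k : ℕ) := Σ j : Fin m, Fin (k + j)

def RR (q : Idx m k) : Finset (Idx m k) := univ.filter fun q' => q'.1 = q.1 ∧ (q'.2 : ℕ) ≤ q.2

def cod (K : ℤ) (j r : ℕ) (p : Idx m k → ℤ) (l : ℕ) : Option (ZMod 2) :=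
  if h : j < m ∧ l < k + j then
    (if l = r then md K (p ⟨⟨j, h.1⟩, ⟨l, h.2⟩⟩) else bd K (p ⟨⟨j, h.1⟩, ⟨l, h.2⟩⟩))
  else none

def SS (K : ℤ) (j r : ℕ) (p : Idx m k → ℤ) : ZMod 2 := first (k + j) (cod K j r p)

def FF (K : ℤ) (q : Idx m k) (p : Idx m k → ℤ) : ZMod 2 :=
  SS K q.1 q.2 p + if k ≤ (q.2 : ℕ) then SS K ((q.2 : ℕ) - k) q.2 p else 0

def chi (q : Idx m k) (a : Idx m k) : ZMod 2 :=
  (if (a.1 : ℕ) = q.1 then 1 else 0) +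
    if k ≤ (q.2 : ℕ) then (if (a.1 : ℕ) = (q.2 : ℕ) - k then 1 else 0) else 0

lemma SS_char (K : ℤ) (hK : 0 < K) (j r : ℕ) (hj : j < m) :
    HasChar (4 * K) RR (SS (k := k) (m := m) K j r) (fun a => if (a.1 : ℕ) = j then 1 else 0) := by
  rintro ⟨j', i⟩ p h0 hb
  by_cases h : (j' : ℕ) = j
  · subst h
    simp only [if_true, SS]
    refine first_flip _ _ _ i i.2 ?_ ?_
    · simp only [cod, i.2, j'.2, and_self, dif_pos]
      simp only [Fin.eta, bd, md]
      rcases h0 with h0 | h0 <;> rw [h0] <;> split_ifs <;> first | omega | simp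
    · intro l hl
      have hl' : l < k + j' := by have := i.2; omega
      have hm : (⟨j', ⟨l, hl'⟩⟩ : Idx m k) ∈ RR (⟨j', i⟩ : Idx m k) := by
        simp [RR, hl]
      simp only [cod, hl', j'.2, and_self, dif_pos, Fin.eta, rfl', hm, if_true, bd_refl _ _ hK, md_refl]
      split_ifs <;> rfl
  · simp only [h, if_false, add_zero, SS]
    congr 1
    funext l
    simp only [cod]
    split_ifs with h1 h2
    · congr 1
      simp only [rfl']
      rw [if_neg]
      simp only [RR, mem_filter, mem_univ, true_and, not_and]
      intro h3; exact absurd (congrArg Fin.val h3).symm h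
    · congr 1
      simp only [rfl']
      rw [if_neg]
      simp only [RR, mem_filter, mem_univ, true_and, not_and]
      intro h3; exact absurd (congrArg Fin.val h3).symm h
    · rfl

lemma FF_char (K : ℤ) (hK : 0 < K) (q : Idx m k) :
    HasChar (4 * K) RR (FF K q) (chi q) := by
  intro a p h0 hb
  simp only [FF, chi]
  rw [SS_char K hK q.1 q.2 q.1.2 a p h0 hb]
  by_cases h : k ≤ (q.2 : ℕ)
  · simp only [h, if_true]
    rw [SS_char K hK ((q.2 : ℕ) - k) q.2 (by have := q.2.2; have := q.1.2; omega) a p h0 hb]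
    ring
  · simp only [h, if_false]; ring

lemma bd_near {K x : ℤ} (hK : 0 < K) (h : 2 * K - 1 ≤ x ∧ x ≤ 2 * K + 1) : bd K x = none := by
  unfold bd; split_ifs <;> first | omega | rfl

lemma SS_top {K : ℤ} (hK : 0 < K) (j r : ℕ) (hr : k + j ≤ r) (p : Idx m k → ℤ)
    (h : ∀ q : Idx m k, (q.1 : ℕ) = j → 2 * K - 1 ≤ p q ∧ p q ≤ 2 * K + 1) :
    SS K j r p = 0 := by
  refine first_none _ _ fun l hl => ?_
  simp only [cod]
  split_ifs with h1 h2
  · omega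
  · exact bd_near hK (h _ rfl)
  · rfl

lemma SS_some {K : ℤ} (hK : 0 < K) (q : Idx m k) (p : Idx m k → ℤ) (x : ZMod 2)
    (h : ∀ q' : Idx m k, q'.1 = q.1 → (q'.2 : ℕ) < q.2 → 2 * K - 1 ≤ p q' ∧ p q' ≤ 2 * K + 1)
    (hx : md K (p q) = some x) :
    SS K q.1 q.2 p = x := by
  refine first_at _ _ q.2 x q.2.2 ?_ ?_
  · intro l hl
    simp only [cod]
    split_ifs with h1 h2
    · omega
    · exact bd_near hK (h _ rfl hl)
    · rfl
  · simp only [cod, q.1.2, q.2.2, and_self, dif_pos, if_true]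
    exact hx

lemma FF_near {K : ℤ} (hK : 0 < K) (q : Idx m k) (p : Idx m k → ℤ)
    (h : ∀ q' : Idx m k, 2 * K - 1 ≤ p q' ∧ p q' ≤ 2 * K + 1) :
    FF K q p = if 2 * K < p q then 1 else 0 := by
  have h1 : (if k ≤ (q.2 : ℕ) then SS K ((q.2 : ℕ) - k) q.2 p else 0) = 0 := by
    split_ifs with hk
    · exact SS_top hK _ _ (by omega) p fun q' _ => h q'
    · rfl
  rw [FF, h1, add_zero]
  by_cases hlt : p q < 2 * K
  · rw [if_neg (by omega)]
    exact SS_some hK q p 0 (fun q' _ _ => h q') (by simp [md, hlt])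
  by_cases hgt : 2 * K < p q
  · rw [if_pos hgt]
    exact SS_some hK q p 1 (fun q' _ _ => h q') (by simp [md, hlt, hgt])
  · rw [if_neg hgt]
    refine first_none _ _ fun l hl => ?_
    simp only [cod]
    split_ifs with h1 h2
    · subst h2
      simp only [Fin.eta, Sigma.eta, md, hlt, hgt, if_false]
    · exact bd_near hK (h _)
    · rfl

lemma vtx_bounds {ι : Type*} [Fintype ι] [DecidableEq ι] {n : ℕ} (σ : (ι → ℤ) × (Fin n ≃ ι))
    (i : ℕ) (a : ι) : σ.1 a ≤ vtx σ i a ∧ vtx σ i a ≤ σ.1 a + 1 := by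
  simp only [vtx, Ev, Od]
  split_ifs <;> omega

lemma near_all {n : ℕ} {K : ℤ} (hK : 0 < K) (σ : (Idx m k → ℤ) × (Fin n ≃ Idx m k))
    (h : ∀ q : Idx m k, ∃ i i', FF K q (vtx σ i) ≠ FF K q (vtx σ i')) :
    ∀ J : ℕ, ∀ r : ℕ, ∀ q : Idx m k, (q.1 : ℕ) = J → (q.2 : ℕ) = r →
      2 * K - 1 ≤ σ.1 q ∧ σ.1 q ≤ 2 * K := by
  intro J
  induction J using Nat.strong_induction_on with
  | _ J ihJ =>
  intro r
  induction r using Nat.strong_induction_on with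
  | _ r ihr =>
  intro q hqJ hqr
  by_contra hcon
  obtain ⟨i, i', hne⟩ := h q
  have nearlow : ∀ i, ∀ q' : Idx m k, ((q'.1 : ℕ) < J ∨ (q'.1 = q.1 ∧ (q'.2 : ℕ) < q.2)) →
      2 * K - 1 ≤ vtx σ i q' ∧ vtx σ i q' ≤ 2 * K + 1 := by
    intro i q' hq'
    have h1 := vtx_bounds σ i q'
    have h2 : 2 * K - 1 ≤ σ.1 q' ∧ σ.1 q' ≤ 2 * K := by
      rcases hq' with hq' | ⟨hq', hlt⟩
      · exact ihJ _ hq' _ q' rfl rfl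
      · exact ihr _ (by omega) q' (by rw [hq', hqJ]) rfl
    omega
  have h1 : ∀ i, (if k ≤ (q.2 : ℕ) then SS K ((q.2 : ℕ) - k) q.2 (vtx σ i) else 0) = 0 := by
    intro i
    split_ifs with hk
    · refine SS_top hK _ _ (by omega) _ fun q' hq' => nearlow i q' (Or.inl ?_)
      have := q.2.2
      omega
    · rfl
  apply hne
  simp only [FF, h1, add_zero]
  have b1 := vtx_bounds σ i q
  have b2 := vtx_bounds σ i' q
  by_cases hlt : σ.1 q < 2 * K - 1
  · rw [SS_some hK q (vtx σ i) 0 (fun q' a b => nearlow i q' (Or.inr ⟨a, b⟩)) 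
        (by simp only [md]; rw [if_pos (by omega)]),
      SS_some hK q (vtx σ i') 0 (fun q' a b => nearlow i' q' (Or.inr ⟨a, b⟩)) 
        (by simp only [md]; rw [if_pos (by omega)])]
  · rw [SS_some hK q (vtx σ i) 1 (fun q' a b => nearlow i q' (Or.inr ⟨a, b⟩)) 
        (by simp only [md]; rw [if_neg (by omega), if_pos (by omega)]),
      SS_some hK q (vtx σ i') 1 (fun q' a b => nearlow i' q' (Or.inr ⟨a, b⟩)) 
        (by simp only [md]; rw [if_neg (by omega), if_pos (by omega)])]

def ext {n : ℕ} {Y : Type*} [Zero Y] (e : Fin n ≃ Idx m k) (g : Idx m k → Y) (a : ℕ) : Y :=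
  if h : a < n then g (e ⟨a, h⟩) else 0

lemma ext_val {n : ℕ} {Y : Type*} [Zero Y] (e : Fin n ≃ Idx m k) (g : Idx m k → Y) (a : Fin n) :
    ext e g a = g (e a) := by simp [ext]

lemma ext_char {n : ℕ} (e : Fin n ≃ Idx m k) {L : ℤ} {R} (g : Idx m k → (Idx m k → ℤ) → ZMod 2)
    (χ : Idx m k → Idx m k → ZMod 2) (h : ∀ q, HasChar L R (g q) (χ q)) (a : ℕ) :
    HasChar L R (ext e g a) (ext e χ a) := by
  unfold ext
  split_ifs
  · exact h _
  · intro a p _ _; simp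

lemma canon_sum {n : ℕ} {K : ℤ} (hK : 0 < K) (e : Fin n ≃ Idx m k) :
    ∑ σ ∈ simps (Idx m k) n (4 * K), Phi (ext e (FF K)) n (vtx σ) = 1 := by
  have hz : ∀ x : ZMod 2, x ≠ 0 → x = 1 := by decide
  have hadd : ∀ x y : ZMod 2, x + y ≠ 0 ↔ x ≠ y := by decide
  rw [sum_eq_single_of_mem ((fun _ => 2 * K, e) : (Idx m k → ℤ) × (Fin n ≃ Idx m k))]
  · refine hz _ ?_
    rw [Phi, prod_ne_zero_iff]
    intro a ha
    have ha := mem_range.1 ha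
    rw [hadd]
    simp only [ext, ha, dif_pos]
    have near : ∀ i, ∀ q' : Idx m k, 2 * K - 1 ≤ vtx ((fun _ => 2 * K, e) : (Idx m k → ℤ) × (Fin n ≃ Idx m k)) i q' ∧ vtx ((fun _ => 2 * K, e) : (Idx m k → ℤ) × (Fin n ≃ Idx m k)) i q' ≤ 2 * K + 1 := by
      intro i q'
      have := vtx_bounds ((fun _ => 2 * K, e) : (Idx m k → ℤ) × (Fin n ≃ Idx m k)) i q'
      simp only at this
      omega
    rw [FF_near hK _ _ (near a), FF_near hK _ _ (near (a + 1))]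
    simp [vtx, Ev, Od]
  · rw [mem_simps]; intro a; simp only; omega
  · intro σ hσ hne
    by_contra hP
    rw [← ne_eq, Phi, prod_ne_zero_iff] at hP
    have hP' : ∀ a : Fin n, FF K (e a) (vtx σ a) ≠ FF K (e a) (vtx σ (a + 1)) := by
      intro a
      have := hP a (mem_range.2 a.2)
      rw [hadd] at this
      simpa [ext_val] using this
    have hnear := near_all hK σ fun q => ⟨_, _, by
      have := hP' (e.symm q)
      rw [e.apply_symm_apply] at this
      exact this⟩
    have near : ∀ i, ∀ q' : Idx m k, 2 * K - 1 ≤ vtx σ i q' ∧ vtx σ i q' ≤ 2 * K + 1 := by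
      intro i q'
      have := vtx_bounds σ i q'
      have := hnear _ _ q' rfl rfl
      omega
    have hkey : ∀ a : Fin n, σ.2 a = e a ∧ σ.1 (e a) = 2 * K := by
      intro a
      have h1 := hP' a
      rw [FF_near hK _ _ (near a), FF_near hK _ _ (near (a + 1))] at h1
      have h2 := hnear _ _ (e a) rfl rfl
      have h3 : σ.2.symm (e a) = a := by
        by_contra h4
        apply h1
        have h5 : ((σ.2.symm (e a) : ℕ) < a) ↔ ((σ.2.symm (e a) : ℕ) < a + 1) := by
          have : (σ.2.symm (e a) : ℕ) ≠ a := fun h => h4 (Fin.ext h)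
          omega
        have h6 : vtx σ a (e a) = vtx σ (a + 1) (e a) := by
          unfold vtx
          split_ifs <;> first | rfl | omega
        rw [h6]
      refine ⟨(σ.2.symm_apply_eq.1 h3).symm, ?_⟩
      simp only [vtx, h3, lt_irrefl, if_false, Nat.lt_succ_self, if_true, Ev, Od] at h1
      by_contra h6
      apply h1
      rw [if_neg (by omega), if_neg (by omega)]
    apply hne
    refine Prod.ext ?_ ?_
    · funext q
      have := (hkey (e.symm q)).2
      simpa using this
    · ext a : 1
      exact (hkey a).1

theorem comb {n : ℕ} {K : ℤ} (hK : 0 < K) (e : Fin n ≃ Idx m k)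
    (g : Idx m k → (Idx m k → ℤ) → ZMod 2) (hg : ∀ q, HasChar (4 * K) RR (g q) (chi q)) :
    ∃ σ ∈ simps (Idx m k) n (4 * K), ∀ a : Fin n,
      g (e a) (vtx σ a) ≠ g (e a) (vtx σ (a + 1)) := by
  have hadd : ∀ x y : ZMod 2, x + y ≠ 0 ↔ x ≠ y := by decide
  have h := sum_indep (n := n) (4 * K) (by omega) (RR (m := m) (k := k))
    (by intro a; simp [RR]) (ext e g) (ext e (FF K)) (ext e chi)
    (ext_char e g chi hg) (ext_char e (FF K) chi (FF_char K hK))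
  rw [canon_sum hK] at h
  obtain ⟨σ, hσ, hne⟩ := exists_ne_zero_of_sum_ne_zero (by rw [h]; exact one_ne_zero)
  refine ⟨σ, hσ, fun a => ?_⟩
  rw [Phi, prod_ne_zero_iff] at hne
  have := hne a (mem_range.2 a.2)
  rw [hadd] at this
  simpa [ext_val] using this

end Canon
end CT

namespace CT
open Finset Filter Topology
open scoped RealInnerProductSpace

section Cont
variable {m k : ℕ}

noncomputable def th (θ : Idx m k → ℝ) (j : Fin m) (l : ℕ) : ℝ :=
  if h : l < k + j then θ ⟨j, ⟨l, h⟩⟩ else 0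

noncomputable def Wc (t : ℕ → ℝ) (c : ℕ) : ℝ := Real.cos (t c) * ∏ l ∈ range c, Real.sin (t l)

lemma Wc_sq (t : ℕ → ℝ) (D : ℕ) :
    ∑ c ∈ range D, (Wc t c) ^ 2 = 1 - ∏ l ∈ range D, (Real.sin (t l)) ^ 2 := by
  induction D with
  | zero => simp
  | succ D ih =>
    rw [sum_range_succ, ih, prod_range_succ, Wc, mul_pow, Real.cos_sq', ← prod_pow]
    ring

noncomputable def W (θ : Idx m k → ℝ) (j : Fin m) : EuclideanSpace ℝ (Fin (k + m)) :=
  WithLp.toLp 2 fun c => Wc (th θ j) c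

lemma th_cont (j : Fin m) (l : ℕ) : Continuous fun θ : Idx m k → ℝ => th θ j l := by
  unfold th; split_ifs <;> fun_prop

lemma W_cont : Continuous (W : (Idx m k → ℝ) → _) := by
  refine continuous_pi fun j => ?_
  refine (PiLp.continuous_toLp 2 _).comp (continuous_pi fun c => ?_)
  unfold Wc
  refine (Real.continuous_cos.comp (th_cont j c)).mul ?_
  exact continuous_finsetProd _ fun l _ => Real.continuous_sin.comp (th_cont j l)

lemma W_norm (θ : Idx m k → ℝ) (j : Fin m) : ‖W θ j‖ = 1 := by
  have h : ‖W θ j‖ ^ 2 = 1 := by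
    rw [EuclideanSpace.norm_sq_eq]
    simp only [W, Real.norm_eq_abs, sq_abs]
    rw [Fin.sum_univ_eq_sum_range (fun c => Wc (th θ j) c ^ 2), Wc_sq, sub_eq_self]
    refine prod_eq_zero (i := k + j) (mem_range.2 (by have := j.2; omega)) ?_
    simp [th]
  have := norm_nonneg (W θ j)
  nlinarith

noncomputable def ang (K : ℤ) (p : Idx m k → ℤ) : Idx m k → ℝ :=
  fun q => Real.pi * (p q / (4 * K))

lemma ang_flip (K : ℤ) (hK : 0 < K) (p : Idx m k → ℤ) (a : Idx m k)
    (h : p a = 0 ∨ p a = 4 * K) :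
    W (ang K (rfl' (4 * K) (RR a) p)) = Function.update (W (ang K p)) a.1 (- W (ang K p) a.1) := by
  have hK' : (K : ℝ) ≠ 0 := by exact_mod_cast hK.ne'
  funext j
  by_cases hj : j = a.1
  · subst hj
    rw [Function.update_self]
    have low : ∀ l ≤ (a.2 : ℕ), th (ang K (rfl' (4 * K) (RR a) p)) a.1 l =
        Real.pi - th (ang K p) a.1 l := by
      intro l hl
      have hl' : l < k + a.1 := by have := a.2.2; omega
      have hm : (⟨a.1, ⟨l, hl'⟩⟩ : Idx m k) ∈ RR a := by simp [RR, hl]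
      simp only [th, hl', dif_pos, ang, rfl', hm, if_true]
      push_cast
      field_simp
    have high : ∀ l, (a.2 : ℕ) < l → th (ang K (rfl' (4 * K) (RR a) p)) a.1 l =
        th (ang K p) a.1 l := by
      intro l hl
      simp only [th]
      split_ifs with h1
      · have hm : (⟨a.1, ⟨l, h1⟩⟩ : Idx m k) ∉ RR a := by simp [RR, hl]
        simp only [ang, rfl', hm, if_false]
      · rfl
    have hsin : Real.sin (th (ang K p) a.1 a.2) = 0 := by
      simp only [th, a.2.2, dif_pos, Fin.eta, Sigma.eta, ang]
      rcases h with h | h <;> rw [h]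
      · simp
      · push_cast
        rw [div_self (by positivity), mul_one, Real.sin_pi]
    have hs : ∀ l, Real.sin (th (ang K (rfl' (4 * K) (RR a) p)) a.1 l) =
        Real.sin (th (ang K p) a.1 l) := by
      intro l
      rcases Nat.lt_or_ge (a.2 : ℕ) l with hl | hl
      · rw [high l hl]
      · rw [low l hl, Real.sin_pi_sub]
    ext c
    simp only [W, PiLp.neg_apply, Wc, hs]
    rcases Nat.lt_or_ge (a.2 : ℕ) c with hl | hl
    · rw [prod_eq_zero (mem_range.2 hl) hsin]; simp
    · rw [low c hl, Real.cos_pi_sub]; ring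
  · rw [Function.update_of_ne hj]
    have : th (ang K (rfl' (4 * K) (RR a) p)) j = th (ang K p) j := by
      funext l
      simp only [th]
      split_ifs with h1
      · have hm : (⟨j, ⟨l, h1⟩⟩ : Idx m k) ∉ RR a := by simp [RR, hj]
        simp only [ang, rfl', hm, if_false]
      · rfl
    simp only [W, this]

open Classical in
noncomputable def sgn (g : (Idx m k → ℝ) → ℝ) (K : ℤ) (q : Idx m k) (p : Idx m k → ℤ) : ZMod 2 :=
  if 0 < g (ang K p) then 0 else if g (ang K p) < 0 then 1 else FF K q p

lemma sgn_ne {g : (Idx m k → ℝ) → ℝ} {K : ℤ} {q : Idx m k} {p p' : Idx m k → ℤ}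
    (h : sgn g K q p ≠ sgn g K q p') : g (ang K p) * g (ang K p') ≤ 0 := by
  by_contra hc
  push Not at hc
  apply h
  unfold sgn
  rcases mul_pos_iff.1 hc with ⟨h1, h2⟩ | ⟨h1, h2⟩
  · simp [h1, h2]
  · simp [h1, h2, h1.le.not_gt, h2.le.not_gt]

lemma sgn_char (g : (Idx m k → ℝ) → ℝ) (K : ℤ) (hK : 0 < K) (q : Idx m k)
    (h1 : ∀ a : Idx m k, ∀ p : Idx m k → ℤ, (p a = 0 ∨ p a = 4 * K) → chi q a = 1 →
      g (ang K (rfl' (4 * K) (RR a) p)) = - g (ang K p))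
    (h0 : ∀ a : Idx m k, ∀ p : Idx m k → ℤ, (p a = 0 ∨ p a = 4 * K) → chi q a = 0 →
      g (ang K (rfl' (4 * K) (RR a) p)) = g (ang K p)) :
    HasChar (4 * K) RR (sgn g K q) (chi q) := by
  intro a p hp hb
  have hF := FF_char K hK q a p hp hb
  have hz : ∀ x : ZMod 2, x = 0 ∨ x = 1 := by decide
  unfold sgn
  rcases hz (chi q a) with hc | hc
  · rw [h0 a p hp hc, hF, hc]; simp
  · rw [h1 a p hp hc, hF, hc]
    have := two_z 1
    split_ifs <;> first | linarith | simp [this] 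

theorem borsuk_stiefel (G : Fin m → ℕ → (Fin m → EuclideanSpace ℝ (Fin (k + m))) → ℝ)
    (hG : ∀ j r, ContinuousOn (G j r) {w | ∀ j, ‖w j‖ = 1})
    (hflip : ∀ j r w, G j r (Function.update w j (- w j)) = - G j r w)
    (hinv : ∀ j r w i, i ≠ j → G j r (Function.update w i (- w i)) = G j r w) :
    ∃ w : Fin m → EuclideanSpace ℝ (Fin (k + m)), Orthonormal ℝ w ∧ ∀ j, ∀ r < k, G j r w = 0 := by
  -- the test functions
  let g : Idx m k → (Idx m k → ℝ) → ℝ := fun q θ =>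
    if h : k ≤ (q.2 : ℕ) then
      ⟪W θ q.1, W θ ⟨(q.2 : ℕ) - k, by have := q.2.2; have := q.1.2; omega⟩⟫
    else G q.1 q.2 (W θ)
  have hgc : ∀ q, Continuous (g q) := by
    intro q
    simp only [g]
    split_ifs
    · exact ((continuous_apply _).comp W_cont).inner ((continuous_apply _).comp W_cont)
    · exact (hG _ _).comp_continuous W_cont (fun θ j => W_norm θ j)
  have hchar : ∀ (K : ℤ), 0 < K → ∀ q, HasChar (4 * K) RR (sgn (g q) K q) (chi q) := by
    intro K hK q
    apply sgn_char _ _ hK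
    · intro a p hp hc
      simp only [g]
      rw [ang_flip K hK p a hp]
      split_ifs with h
      · simp only [chi, h, if_true] at hc
        by_cases h1 : (a.1 : ℕ) = q.1
        · have h1' : q.1 = a.1 := Fin.ext h1.symm
          have h2 : (⟨(q.2 : ℕ) - k, by have := q.2.2; have := q.1.2; omega⟩ : Fin m) ≠ a.1 := by
            intro h3
            have := congrArg Fin.val h3
            simp only at this
            have := q.2.2
            omega
          have h4 : ∀ w : Fin m → EuclideanSpace ℝ (Fin (k + m)), ∀ i j, i = j →
              Function.update w j (- w j) i = - w i := by
            rintro w i _ rfl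
            simp
          rw [Function.update_of_ne h2, h4 _ _ _ h1', inner_neg_left]
        · have h1' : q.1 ≠ a.1 := fun h => h1 (by rw [h])
          by_cases h3 : (a.1 : ℕ) = (q.2 : ℕ) - k
          · have h2 : (⟨(q.2 : ℕ) - k, by have := q.2.2; have := q.1.2; omega⟩ : Fin m) = a.1 :=
              Fin.ext h3.symm
            rw [h2, Function.update_of_ne h1', Function.update_self, inner_neg_right]
          · simp [h1, h3] at hc
      · simp only [chi, h, if_false, add_zero] at hc
        have h1 : q.1 = a.1 := by
          by_contra h1
          rw [if_neg (fun h => h1 (Fin.ext h.symm))] at hc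
          simp at hc
        rw [← h1]; exact hflip _ _ _
    · intro a p hp hc
      simp only [g]
      rw [ang_flip K hK p a hp]
      split_ifs with h
      · simp only [chi, h, if_true] at hc
        by_cases h1 : (a.1 : ℕ) = q.1
        · have : ¬ ((a.1 : ℕ) = (q.2 : ℕ) - k) := by have := q.2.2; omega
          rw [if_pos h1, if_neg this] at hc
          simp at hc
        · by_cases h3 : (a.1 : ℕ) = (q.2 : ℕ) - k
          · rw [if_neg h1, if_pos h3] at hc
            simp at hc
          · rw [Function.update_of_ne, Function.update_of_ne]
            · intro h4; exact h3 (by rw [← h4])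
            · intro h4; exact h1 (by rw [h4])
      · simp only [chi, h, if_false, add_zero] at hc
        have h1 : a.1 ≠ q.1 := by
          intro h1
          rw [h1, if_pos rfl] at hc
          simp at hc
        exact hinv _ _ _ _ h1
  -- combinatorial lemma
  let n := Fintype.card (Idx m k)
  let e : Fin n ≃ Idx m k := (Fintype.equivFin _).symm
  have hcomb : ∀ N : ℕ, ∃ σ ∈ simps (Idx m k) n (4 * ((N : ℤ) + 1)), ∀ a : Fin n,
      g (e a) (ang (N + 1) (vtx σ a)) * g (e a) (ang (N + 1) (vtx σ (a + 1))) ≤ 0 := by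
    intro N
    obtain ⟨σ, hσ, h⟩ := comb (K := (N : ℤ) + 1) (by positivity) e
      (fun q => sgn (g q) (N + 1) q) (hchar _ (by positivity))
    exact ⟨σ, hσ, fun a => sgn_ne (h a)⟩
  choose σ hσ hprod using hcomb
  let x : ℕ → ℕ → Idx m k → ℝ := fun i N => ang (N + 1) (vtx (σ N) i)
  have hx0 : ∀ N, x 0 N ∈ Set.pi Set.univ (fun _ : Idx m k => Set.Icc (0 : ℝ) Real.pi) := by
    intro N q _
    have h := vtx_mem (hσ N) (by omega) 0 q
    have hb0 : (0 : ℝ) ≤ vtx (σ N) 0 q := by exact_mod_cast h.1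
    have hb1 : (vtx (σ N) 0 q : ℝ) ≤ 4 * (N + 1) := by exact_mod_cast h.2
    simp only [x, ang]
    push_cast
    have hpi := Real.pi_pos
    constructor
    · positivity
    · have : (vtx (σ N) 0 q : ℝ) / (4 * (N + 1)) ≤ 1 := by
        rw [div_le_one (by positivity)]; exact hb1
      nlinarith
  obtain ⟨θ, -, φ, hφ, hlim⟩ := (isCompact_univ_pi fun _ : Idx m k =>
    isCompact_Icc (a := (0 : ℝ)) (b := Real.pi)).tendsto_subseq hx0
  have hlim' : ∀ i, Tendsto (x i ∘ φ) atTop (𝓝 θ) := by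
    intro i
    rw [tendsto_pi_nhds] at hlim ⊢
    intro q
    have hd : Tendsto (fun N : ℕ => Real.pi * (1 / ((N : ℝ) + 1))) atTop (𝓝 0) := by
      simpa using (tendsto_one_div_add_atTop_nhds_zero_nat (𝕜 := ℝ)).const_mul Real.pi
    have hd' := hd.comp hφ.tendsto_atTop
    have hdiff : Tendsto (fun N => x i (φ N) q - x 0 (φ N) q) atTop (𝓝 0) := by
      refine squeeze_zero_norm (fun N => ?_) hd'
      have b1 := vtx_bounds (σ (φ N)) i q
      have b2 := vtx_bounds (σ (φ N)) 0 q
      have hb : |((vtx (σ (φ N)) i q : ℝ) - vtx (σ (φ N)) 0 q)| ≤ 1 := by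
        have : |vtx (σ (φ N)) i q - vtx (σ (φ N)) 0 q| ≤ 1 := by rw [abs_le]; omega
        exact_mod_cast this
      simp only [x, ang, Function.comp, Real.norm_eq_abs]
      push_cast
      rw [← mul_sub, ← sub_div, abs_mul, abs_of_pos Real.pi_pos, abs_div]
      refine mul_le_mul_of_nonneg_left ?_ Real.pi_pos.le
      have hp : (0 : ℝ) < (φ N : ℝ) + 1 := by positivity
      rw [abs_of_pos (by positivity : (0 : ℝ) < 4 * ((φ N : ℝ) + 1))]
      exact div_le_div₀ zero_le_one hb hp (by linarith)
    have := hdiff.add (hlim q)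
    simpa using this
  have hzero : ∀ q, g q θ = 0 := by
    intro q
    have h1 := ((hgc q).tendsto θ).comp (hlim' (e.symm q))
    have h2 := ((hgc q).tendsto θ).comp (hlim' (e.symm q + 1))
    have h3 := h1.mul h2
    have h4 : g q θ * g q θ ≤ 0 := by
      refine le_of_tendsto h3 (Eventually.of_forall fun N => ?_)
      have := hprod (φ N) (e.symm q)
      rw [e.apply_symm_apply] at this
      exact this
    nlinarith
  have hort : ∀ i j : Fin m, i < j → ⟪W θ j, W θ i⟫ = 0 := by
    intro i j hij
    have hij' : (i : ℕ) < j := hij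
    have := hzero ⟨j, ⟨k + i, by omega⟩⟩
    simpa [g] using this
  refine ⟨W θ, ⟨W_norm θ, fun i j hij => ?_⟩, fun j r hr => ?_⟩
  · rcases lt_or_gt_of_ne hij with h | h
    · rw [real_inner_comm]; exact hort _ _ h
    · exact hort _ _ h
  · have := hzero ⟨j, ⟨r, by omega⟩⟩
    simpa [g, Nat.not_le.2 hr] using this

end Cont
end CT

namespace CT
open MeasureTheory Filter Topology
open scoped RealInnerProductSpace ENNReal

section Center
variable {m n : ℕ}

noncomputable def rho (δ s : ℝ) : ℝ := max 0 (min 1 (1 - s / δ))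

lemma rho_cont (δ : ℝ) : Continuous (rho δ) := by unfold rho; fun_prop
lemma rho_nonneg (δ s : ℝ) : 0 ≤ rho δ s := le_max_left _ _
lemma rho_le_one (δ s : ℝ) : rho δ s ≤ 1 := max_le zero_le_one (min_le_left _ _)
lemma rho_anti {δ : ℝ} (hδ : 0 < δ) : Antitone (rho δ) := by
  intro s t h
  unfold rho
  gcongr
lemma rho_of_nonpos {δ s : ℝ} (hδ : 0 < δ) (hs : s ≤ 0) : rho δ s = 1 := by
  have : s / δ ≤ 0 := div_nonpos_of_nonpos_of_nonneg hs hδ.le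
  unfold rho
  rw [min_eq_left (by linarith), max_eq_right zero_le_one]
lemma rho_of_ge {δ s : ℝ} (hδ : 0 < δ) (hs : δ ≤ s) : rho δ s = 0 := by
  have : 1 ≤ s / δ := by rwa [le_div_iff₀ hδ, one_mul]
  unfold rho
  rw [max_eq_left]
  exact (min_le_right _ _).trans (by linarith)

/-- the linear functional evaluated at a point -/
noncomputable def lin (a : Fin m → ℝ) (w : Fin m → EuclideanSpace ℝ (Fin n)) (t : Fin m → ℝ)
    (x : EuclideanSpace ℝ (Fin n)) : ℝ := ∑ j, a j * (⟪x, w j⟫ - t j)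

noncomputable def ff (μ : Measure (EuclideanSpace ℝ (Fin n))) (δ : ℝ)
    (w : Fin m → EuclideanSpace ℝ (Fin n)) (t a : Fin m → ℝ) : ℝ :=
  ∫ x, rho δ (lin a w t x) ∂μ

variable (μ : Measure (EuclideanSpace ℝ (Fin n))) [IsProbabilityMeasure μ]

lemma rho_int (δ : ℝ) (w : Fin m → EuclideanSpace ℝ (Fin n)) (t a : Fin m → ℝ) :
    Integrable (fun x => rho δ (lin a w t x)) μ := by
  refine Integrable.of_bound (C := 1) ?_ (ae_of_all _ fun x => ?_)
  · refine Continuous.aestronglyMeasurable ((rho_cont δ).comp ?_)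
    unfold lin; fun_prop
  · rw [Real.norm_eq_abs, abs_of_nonneg (rho_nonneg _ _)]; exact rho_le_one _ _

lemma ff_cont (δ : ℝ) : Continuous
    (fun p : ((Fin m → EuclideanSpace ℝ (Fin n)) × (Fin m → ℝ)) × (Fin m → ℝ) =>
      ff μ δ p.1.1 p.1.2 p.2) := by
  unfold ff
  refine continuous_of_dominated (bound := fun _ => 1) (fun p => (rho_int μ δ _ _ _).1) 
    (fun p => ae_of_all _ fun x => ?_) (integrable_const _) (ae_of_all _ fun x => ?_)
  · rw [Real.norm_eq_abs, abs_of_nonneg (rho_nonneg _ _)]; exact rho_le_one _ _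
  · refine (rho_cont δ).comp ?_
    unfold lin; fun_prop

lemma ff_nonneg (δ : ℝ) (w : Fin m → EuclideanSpace ℝ (Fin n)) (t a : Fin m → ℝ) :
    0 ≤ ff μ δ w t a := integral_nonneg fun _ => rho_nonneg _ _

lemma lin_eq (a : Fin m → ℝ) (w : Fin m → EuclideanSpace ℝ (Fin n)) (t : Fin m → ℝ)
    (x : EuclideanSpace ℝ (Fin n)) : lin a w t x = ⟪x, ∑ j, a j • w j⟫ - ∑ j, a j * t j := by
  simp [lin, mul_sub, inner_sum, inner_smul_right]

lemma ff_mono {δ : ℝ} (hδ : 0 < δ) (w : Fin m → EuclideanSpace ℝ (Fin n)) {t t' a : Fin m → ℝ}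
    (h : ∑ j, a j * t j ≤ ∑ j, a j * t' j) : ff μ δ w t a ≤ ff μ δ w t' a := by
  refine integral_mono (rho_int _ _ _ _ _) (rho_int _ _ _ _ _) fun x => rho_anti hδ ?_
  rw [lin_eq, lin_eq]; linarith

lemma cdf (lam : Measure ℝ) [IsFiniteMeasure lam] (c : ℝ≥0∞) :
    lam {z | lam (Set.Iic z) < c} ≤ c := by
  by_contra h
  push Not at h
  have hm : MeasurableSet {z | lam (Set.Iic z) < c} := by
    refine Set.OrdConnected.measurableSet ⟨?_⟩
    intro x _ y hy z hz
    exact (measure_mono (Set.Iic_subset_Iic.2 hz.2)).trans_lt hy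
  obtain ⟨K, hK, hc, hlt⟩ := hm.exists_lt_isCompact h
  have hne : K.Nonempty := by
    rcases K.eq_empty_or_nonempty with rfl | h'
    · simp at hlt
    · exact h'
  obtain ⟨z, hz, hz'⟩ := hc.exists_isGreatest hne
  have h1 : lam K ≤ lam (Set.Iic z) := measure_mono fun y hy => hz' hy
  exact absurd (hlt.trans_le h1) (hK hz).not_gt

lemma ff_ge {δ : ℝ} (hδ : 0 < δ) (w : Fin m → EuclideanSpace ℝ (Fin n)) (t a : Fin m → ℝ) :
    μ {x | lin a w t x ≤ 0} ≤ ENNReal.ofReal (ff μ δ w t a) := by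
  have hm : MeasurableSet {x | lin a w t x ≤ 0} := by
    refine (isClosed_le ?_ continuous_const).measurableSet
    unfold lin; fun_prop
  rw [← ofReal_measureReal (μ := μ) (s := {x | lin a w t x ≤ 0}), ← integral_indicator_one hm]
  refine ENNReal.ofReal_le_ofReal (integral_mono ?_ (rho_int _ _ _ _ _) fun x => ?_)
  · exact (integrable_const (1 : ℝ)).indicator hm
  · by_cases hx : lin a w t x ≤ 0
    · simp [rho_of_nonpos hδ hx, Set.indicator, hx]
    · simp [Set.indicator, hx, rho_nonneg]

lemma ff_le {δ : ℝ} (hδ : 0 < δ) (w : Fin m → EuclideanSpace ℝ (Fin n)) (t a : Fin m → ℝ) :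
    ENNReal.ofReal (ff μ δ w t a) ≤ μ {x | lin a w t x < δ} := by
  have hm : MeasurableSet {x | lin a w t x < δ} := by
    refine (isOpen_lt ?_ continuous_const).measurableSet
    unfold lin; fun_prop
  rw [← ofReal_measureReal (μ := μ) (s := {x | lin a w t x < δ}), ← integral_indicator_one hm]
  refine ENNReal.ofReal_le_ofReal (integral_mono (rho_int _ _ _ _ _) ?_ fun x => ?_)
  · exact (integrable_const (1 : ℝ)).indicator hm
  · by_cases hx : lin a w t x < δ
    · simp [Set.indicator, hx, rho_le_one]
    · simp [rho_of_ge hδ (not_lt.1 hx), Set.indicator, hx]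

/-- bad points have small measure -/
lemma bad {δ : ℝ} (hδ : 0 < δ) (w : Fin m → EuclideanSpace ℝ (Fin n)) (a : Fin m → ℝ) (c : ℝ) :
    μ {y | ff μ δ w (fun j => ⟪y, w j⟫) a < c} ≤ ENNReal.ofReal c := by
  let Z : EuclideanSpace ℝ (Fin n) → ℝ := fun x => ⟪x, ∑ j, a j • w j⟫
  have hZ : Measurable Z := by
    have : Continuous Z := by fun_prop
    exact this.measurable
  have : IsProbabilityMeasure (μ.map Z) := Measure.isProbabilityMeasure_map hZ.aemeasurable
  have h := cdf (μ.map Z) (ENNReal.ofReal c)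
  have hm : MeasurableSet {z | μ.map Z (Set.Iic z) < ENNReal.ofReal c} := by
    refine Set.OrdConnected.measurableSet ⟨?_⟩
    intro x _ y hy z hz
    exact (measure_mono (Set.Iic_subset_Iic.2 hz.2)).trans_lt hy
  rw [Measure.map_apply hZ hm] at h
  refine (measure_mono ?_).trans h
  intro y hy
  simp only [Set.mem_preimage, Set.mem_setOf_eq] at hy ⊢
  rw [Measure.map_apply hZ measurableSet_Iic]
  have h1 := ff_ge μ hδ w (fun j => ⟪y, w j⟫) a
  have h2 : Z ⁻¹' Set.Iic (Z y) = {x | lin a w (fun j => ⟪y, w j⟫) x ≤ 0} := by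
    ext x
    simp [Z, lin_eq, inner_sum, inner_smul_right]
  rw [h2]
  refine h1.trans_lt ?_
  rw [ENNReal.ofReal_lt_ofReal_iff_of_nonneg (ff_nonneg _ _ _ _ _)]
  exact hy

/-- tightness -/
lemma tight (ε : ℝ) (hε : 0 < ε) : ∃ R : ℝ, 0 < R ∧
    μ {x | R < ‖x‖} < ENNReal.ofReal ε := by
  have h0 : ENNReal.ofReal ε ≠ 0 := by simpa using hε
  have hlt : (1 : ℝ≥0∞) - ENNReal.ofReal ε < μ Set.univ := by
    rw [measure_univ]; exact ENNReal.sub_lt_self (by simp) (by simp) h0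
  have hU : (Set.univ : Set (EuclideanSpace ℝ (Fin n))) = ⋃ N : ℕ, {x | ‖x‖ ≤ N + 1} := by
    symm; rw [Set.eq_univ_iff_forall]
    intro x
    obtain ⟨N, hN⟩ := exists_nat_ge ‖x‖
    exact Set.mem_iUnion.2 ⟨N, by simp only [Set.mem_setOf_eq]; linarith⟩
  rw [hU, Monotone.measure_iUnion] at hlt
  · obtain ⟨N, hN⟩ := lt_iSup_iff.1 hlt
    refine ⟨N + 1, by positivity, ?_⟩
    have : {x : EuclideanSpace ℝ (Fin n) | (N : ℝ) + 1 < ‖x‖} = {x | ‖x‖ ≤ N + 1}ᶜ := by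
      ext; simp
    rw [this, prob_compl_eq_one_sub (isClosed_le continuous_norm continuous_const).measurableSet]
    rw [ENNReal.sub_lt_iff_lt_right (measure_ne_top _ _) prob_le_one]
    by_cases h1 : ENNReal.ofReal ε ≤ 1
    · rw [add_comm]; rwa [ENNReal.sub_lt_iff_lt_right (by simp) h1] at hN
    · exact (not_le.1 h1).trans_le le_self_add
  · intro N M h x hx
    have : (N : ℝ) ≤ M := by exact_mod_cast h
    simp only [Set.mem_setOf_eq] at hx ⊢
    linarith

/-- Approximate centerpoints exist. -/
lemma exists_center {δ : ℝ} (hδ : 0 < δ) {c R : ℝ} (hR : 0 < R) (hc : 0 ≤ c)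
    (hcR : μ {x | R < ‖x‖} < ENNReal.ofReal (1 - (m + 1) * c))
    (w : Fin m → EuclideanSpace ℝ (Fin n)) (hw : ∀ j, ‖w j‖ = 1) :
    ∃ t : Fin m → ℝ, ‖t‖ ≤ R ∧ ∀ a, c ≤ ff μ δ w t a := by
  have hcont : ∀ a, Continuous fun t => ff μ δ w t a := fun a =>
    (ff_cont μ δ).comp (by fun_prop : Continuous fun t : Fin m → ℝ => ((w, t), a))
  let F : (Fin m → ℝ) → Set (Fin m → ℝ) := fun a =>
    Metric.closedBall 0 R ∩ {t | c ≤ ff μ δ w t a}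
  have hF : (⋂ a, F a).Nonempty := by
    apply Convex.helly_theorem_compact' (𝕜 := ℝ)
    · intro a
      refine (convex_closedBall _ _).inter ?_
      intro t ht t' ht' p q hp hq hpq
      simp only [Set.mem_setOf_eq] at *
      rcases le_total (∑ j, a j * t j) (∑ j, a j * t' j) with h | h
      · refine ht.trans (ff_mono μ hδ w ?_)
        have : ∑ j, a j * (p • t + q • t') j = p * ∑ j, a j * t j + q * ∑ j, a j * t' j := by
          simp only [Finset.mul_sum, ← Finset.sum_add_distrib]
          refine Finset.sum_congr rfl fun j _ => ?_
          simp; ring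
        rw [this]
        obtain rfl : p = 1 - q := by linarith
        nlinarith
      · refine ht'.trans (ff_mono μ hδ w ?_)
        have : ∑ j, a j * (p • t + q • t') j = p * ∑ j, a j * t j + q * ∑ j, a j * t' j := by
          simp only [Finset.mul_sum, ← Finset.sum_add_distrib]
          refine Finset.sum_congr rfl fun j _ => ?_
          simp; ring
        rw [this]
        obtain rfl : q = 1 - p := by linarith
        nlinarith
    · intro a
      exact (isCompact_closedBall _ _).inter_right (isClosed_le continuous_const (hcont a))
    · intro I hI
      rw [Module.finrank_fin_fun] at hI
      by_contra hne
      have hcov : (Set.univ : Set (EuclideanSpace ℝ (Fin n))) ⊆ {x | R < ‖x‖} ∪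
          ⋃ a ∈ I, {y | ff μ δ w (fun j => ⟪y, w j⟫) a < c} := by
        intro y _
        by_contra hy
        simp only [Set.mem_union, Set.mem_setOf_eq, Set.mem_iUnion, not_or, not_lt, not_exists] at hy
        apply hne
        refine ⟨fun j => ⟪y, w j⟫, ?_⟩
        simp only [Set.mem_iInter, F]
        intro a ha
        refine ⟨?_, hy.2 a ha⟩
        rw [mem_closedBall_zero_iff, pi_norm_le_iff_of_nonneg hR.le]
        intro j
        have := norm_inner_le_norm (𝕜 := ℝ) y (w j)
        rw [hw j, mul_one] at this
        exact this.trans hy.1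
      have h1 := measure_mono (μ := μ) hcov
      rw [measure_univ] at h1
      have h2 : μ (⋃ a ∈ I, {y | ff μ δ w (fun j => ⟪y, w j⟫) a < c}) ≤
          ENNReal.ofReal ((m + 1) * c) := by
        refine (measure_biUnion_finset_le _ _).trans ?_
        refine (Finset.sum_le_sum fun a _ => bad μ hδ w a c).trans ?_
        rw [Finset.sum_const, nsmul_eq_mul, ENNReal.ofReal_mul (by positivity)]
        gcongr
        rw [← ENNReal.ofReal_natCast]
        exact ENNReal.ofReal_le_ofReal (by exact_mod_cast hI)
      have h3 : (1 : ℝ≥0∞) < 1 := by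
        calc (1 : ℝ≥0∞) ≤ _ := h1
          _ ≤ _ := measure_union_le _ _
          _ ≤ μ {x | R < ‖x‖} + ENNReal.ofReal ((m + 1) * c) := by gcongr
          _ < ENNReal.ofReal (1 - (m + 1) * c) + ENNReal.ofReal ((m + 1) * c) :=
            ENNReal.add_lt_add_right (by simp) hcR
          _ = ENNReal.ofReal 1 := by
            rw [← ENNReal.ofReal_add _ (by positivity)]
            · simp
            · by_contra h
              rw [ENNReal.ofReal_of_nonpos (not_le.1 h).le] at hcR
              simp at hcR
          _ = 1 := by simp
      exact lt_irrefl _ h3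
  obtain ⟨t, ht⟩ := hF
  simp only [Set.mem_iInter, F] at ht
  exact ⟨t, mem_closedBall_zero_iff.1 (ht 0).1, fun a => (ht a).2⟩

end Center
end CT

namespace CT
open MeasureTheory Filter Topology
open scoped RealInnerProductSpace ENNReal

section Weighted
variable {m n : ℕ}

lemma pos_int {R : ℝ} {h : (Fin m → ℝ) → ℝ} (hc : Continuous h) (h0 : ∀ t, 0 ≤ h t)
    {t0 : Fin m → ℝ} (ht0 : ‖t0‖ < R) (hpos : 0 < h t0) :
    0 < ∫ t in Metric.closedBall (0 : Fin m → ℝ) R, h t := by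
  rw [setIntegral_pos_iff_support_of_nonneg_ae (ae_of_all _ h0)
    (hc.continuousOn.integrableOn_compact (isCompact_closedBall _ _))]
  have hU : IsOpen ({t | 0 < h t} ∩ Metric.ball (0 : Fin m → ℝ) R) :=
    (isOpen_lt continuous_const hc).inter Metric.isOpen_ball
  refine (hU.measure_pos volume ⟨t0, hpos, by simpa using ht0⟩).trans_le (measure_mono ?_)
  rintro t ⟨h1, h2⟩
  exact ⟨ne_of_gt h1, Metric.ball_subset_closedBall h2⟩

def sg (j i : Fin m) : ℝ := if i = j then -1 else 1

lemma sg_sq (j i : Fin m) : sg j i * sg j i = 1 := by unfold sg; split_ifs <;> norm_num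
lemma sg_abs (j i : Fin m) : |sg j i| = 1 := by unfold sg; split_ifs <;> norm_num

def fl (j : Fin m) (t : Fin m → ℝ) : Fin m → ℝ := fun i => sg j i * t i

lemma fl_fl (j : Fin m) (t : Fin m → ℝ) : fl j (fl j t) = t := by
  funext i; simp [fl, ← mul_assoc, sg_sq]

lemma fl_norm (j : Fin m) (t : Fin m → ℝ) : ‖fl j t‖ = ‖t‖ := by
  have h : ∀ t, ‖fl j t‖ ≤ ‖t‖ := by
    intro t
    rw [pi_norm_le_iff_of_nonneg (norm_nonneg _)]
    intro i
    simp only [fl, norm_mul, Real.norm_eq_abs, sg_abs, one_mul]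
    exact norm_le_pi_norm t i
  refine le_antisymm (h t) ?_
  conv_lhs => rw [← fl_fl j t]
  exact h _

lemma fl_cont (j : Fin m) : Continuous (fl j) := by unfold fl; fun_prop

lemma fl_mp (j : Fin m) : MeasurePreserving (fl j) volume volume := by
  refine volume_preserving_pi (f := fun i s => sg j i * s) fun i => ?_
  unfold sg
  split_ifs
  · simpa using Measure.measurePreserving_neg (volume : Measure ℝ)
  · simp only [one_mul]
    exact MeasurePreserving.id (volume : Measure ℝ)

lemma fl_int (j : Fin m) (R : ℝ) (h : (Fin m → ℝ) → ℝ) :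
    ∫ t in Metric.closedBall (0 : Fin m → ℝ) R, h (fl j t) =
    ∫ t in Metric.closedBall (0 : Fin m → ℝ) R, h t := by
  have he : MeasurableEmbedding (fl j) := (fl_cont j).measurableEmbedding
    (Function.LeftInverse.injective (fl_fl j))
  rw [← (fl_mp j).setIntegral_preimage_emb he h]
  have hpre : fl j ⁻¹' Metric.closedBall 0 R = Metric.closedBall 0 R := by
    ext t
    simp [fl_norm]
  rw [hpre]

variable (μ : Measure (EuclideanSpace ℝ (Fin n))) [IsProbabilityMeasure μ]

noncomputable def DD (δ : ℝ) (w : Fin m → EuclideanSpace ℝ (Fin n)) (t : Fin m → ℝ) : ℝ :=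
  sInf (ff μ δ w t '' Metric.sphere 0 1)

lemma DD_cont (δ : ℝ) : Continuous
    (fun p : (Fin m → EuclideanSpace ℝ (Fin n)) × (Fin m → ℝ) => DD μ δ p.1 p.2) := by
  unfold DD
  exact IsCompact.continuous_sInf (f := fun (p : (Fin m → EuclideanSpace ℝ (Fin n)) × (Fin m → ℝ)) a
    => ff μ δ p.1 p.2 a) (isCompact_sphere _ _) (ff_cont μ δ)

lemma DD_le (δ : ℝ) (w : Fin m → EuclideanSpace ℝ (Fin n)) (t a : Fin m → ℝ) (ha : ‖a‖ = 1) :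
    DD μ δ w t ≤ ff μ δ w t a := by
  refine csInf_le ⟨0, ?_⟩ ⟨a, by simpa using ha, rfl⟩
  rintro _ ⟨b, _, rfl⟩
  exact ff_nonneg _ _ _ _ _

lemma le_DD (hm : 0 < m) (δ c : ℝ) (w : Fin m → EuclideanSpace ℝ (Fin n)) (t : Fin m → ℝ)
    (h : ∀ a, c ≤ ff μ δ w t a) : c ≤ DD μ δ w t := by
  have : Nonempty (Fin m) := ⟨⟨0, hm⟩⟩
  refine le_csInf ?_ ?_
  · refine Set.Nonempty.image _ ?_
    exact NormedSpace.sphere_nonempty.2 zero_le_one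
  · rintro _ ⟨b, _, rfl⟩
    exact h b

lemma upd_eq (w : Fin m → EuclideanSpace ℝ (Fin n)) (j i : Fin m) :
    Function.update w j (- w j) i = sg j i • w i := by
  unfold sg
  by_cases h : i = j
  · subst h; simp
  · simp [h]

lemma DD_flip (δ : ℝ) (w : Fin m → EuclideanSpace ℝ (Fin n)) (t : Fin m → ℝ) (j : Fin m) :
    DD μ δ (Function.update w j (- w j)) (fl j t) = DD μ δ w t := by
  have h : ∀ a, ff μ δ (Function.update w j (- w j)) (fl j t) a = ff μ δ w t (fl j a) := by
    intro a
    unfold ff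
    congr 1
    funext x
    congr 1
    unfold lin
    refine Finset.sum_congr rfl fun i _ => ?_
    rw [upd_eq, inner_smul_right]
    simp only [fl]
    ring
  unfold DD
  congr 1
  ext y
  constructor
  · rintro ⟨a, ha, rfl⟩
    exact ⟨fl j a, by simpa [fl_norm] using ha, (h a).symm⟩
  · rintro ⟨a, ha, rfl⟩
    exact ⟨fl j a, by simpa [fl_norm] using ha, by rw [h, fl_fl]⟩

noncomputable def psi (δ κ : ℝ) (w : Fin m → EuclideanSpace ℝ (Fin n)) (t : Fin m → ℝ) : ℝ :=
  max 0 (DD μ δ w t - κ)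

lemma psi_cont (δ κ : ℝ) : Continuous
    (fun p : (Fin m → EuclideanSpace ℝ (Fin n)) × (Fin m → ℝ) => psi μ δ κ p.1 p.2) :=
  continuous_const.max ((DD_cont μ δ).sub continuous_const)

lemma psi_cont1 (δ κ : ℝ) (w : Fin m → EuclideanSpace ℝ (Fin n)) : Continuous (psi μ δ κ w) := by
  have h : Continuous fun t : Fin m → ℝ => (w, t) := Continuous.prodMk_right w
  have h2 := (psi_cont μ δ κ).comp h
  exact h2

lemma psi_nonneg (δ κ : ℝ) (w : Fin m → EuclideanSpace ℝ (Fin n)) (t : Fin m → ℝ) :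
    0 ≤ psi μ δ κ w t := le_max_left _ _

noncomputable def den (δ κ R : ℝ) (w : Fin m → EuclideanSpace ℝ (Fin n)) : ℝ :=
  ∫ t in Metric.closedBall (0 : Fin m → ℝ) R, psi μ δ κ w t

noncomputable def num (δ κ R : ℝ) (i : Fin m) (w : Fin m → EuclideanSpace ℝ (Fin n)) : ℝ :=
  ∫ t in Metric.closedBall (0 : Fin m → ℝ) R, t i * psi μ δ κ w t

lemma den_cont (δ κ R : ℝ) :
    Continuous (den μ δ κ R : (Fin m → EuclideanSpace ℝ (Fin n)) → ℝ) := by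
  unfold den
  exact continuous_parametric_integral_of_continuous
    (f := fun (w : Fin m → EuclideanSpace ℝ (Fin n)) (t : Fin m → ℝ) => psi μ δ κ w t)
    (psi_cont μ δ κ) (isCompact_closedBall _ _)

lemma num_cont (δ κ R : ℝ) (i : Fin m) :
    Continuous (num μ δ κ R i : (Fin m → EuclideanSpace ℝ (Fin n)) → ℝ) := by
  unfold num
  exact continuous_parametric_integral_of_continuous
    (f := fun (w : Fin m → EuclideanSpace ℝ (Fin n)) (t : Fin m → ℝ) => t i * psi μ δ κ w t)
    (((continuous_apply i).comp continuous_snd).mul (psi_cont μ δ κ)) (isCompact_closedBall _ _)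

lemma psi_flip (δ κ : ℝ) (w : Fin m → EuclideanSpace ℝ (Fin n)) (t : Fin m → ℝ) (j : Fin m) :
    psi μ δ κ (Function.update w j (- w j)) (fl j t) = psi μ δ κ w t := by
  unfold psi; rw [DD_flip]

lemma den_flip (δ κ R : ℝ) (w : Fin m → EuclideanSpace ℝ (Fin n)) (j : Fin m) :
    den μ δ κ R (Function.update w j (- w j)) = den μ δ κ R w := by
  unfold den
  rw [← fl_int j]
  simp only [psi_flip]

lemma num_flip (δ κ R : ℝ) (w : Fin m → EuclideanSpace ℝ (Fin n)) (i j : Fin m) :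
    num μ δ κ R i (Function.update w j (- w j)) = sg j i * num μ δ κ R i w := by
  unfold num
  rw [← fl_int j, ← integral_const_mul]
  simp only [psi_flip, fl, mul_assoc]

lemma num_lin (δ κ R : ℝ) (w : Fin m → EuclideanSpace ℝ (Fin n)) (a : Fin m → ℝ) (q : ℝ) :
    ∫ t in Metric.closedBall (0 : Fin m → ℝ) R, (∑ j, a j * t j - q) * psi μ δ κ w t =
    ∑ j, a j * num μ δ κ R j w - q * den μ δ κ R w := by
  have hB : IsCompact (Metric.closedBall (0 : Fin m → ℝ) R) := isCompact_closedBall _ _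
  have hi : ∀ j, IntegrableOn (fun t : Fin m → ℝ => t j * psi μ δ κ w t)
      (Metric.closedBall (0 : Fin m → ℝ) R) := fun j =>
    ((continuous_apply j).mul (psi_cont1 μ δ κ w)).continuousOn.integrableOn_compact hB
  have : ∀ t : Fin m → ℝ, (∑ j, a j * t j - q) * psi μ δ κ w t =
      ∑ j, a j * (t j * psi μ δ κ w t) - q * psi μ δ κ w t := by
    intro t
    rw [sub_mul, Finset.sum_mul]
    simp only [mul_assoc]
  simp only [this]
  rw [integral_sub, integral_finsetSum, integral_const_mul]
  · simp only [integral_const_mul]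
    rfl
  · intro j _
    exact (hi j).const_mul _
  · exact integrable_finsetSum _ fun j _ => (hi j).const_mul _
  · exact ((psi_cont1 μ δ κ w).continuousOn.integrableOn_compact hB).const_mul _

lemma wcenter {δ : ℝ} (hδ : 0 < δ) {κ R : ℝ} (w : Fin m → EuclideanSpace ℝ (Fin n))
    {t0 : Fin m → ℝ} (ht0 : ‖t0‖ < R) (hp0 : 0 < psi μ δ κ w t0) (hd : 0 < den μ δ κ R w)
    (a : Fin m → ℝ) (ha : ‖a‖ = 1) :
    κ ≤ ff μ δ w (fun i => num μ δ κ R i w / den μ δ κ R w) a := by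
  by_contra hlt
  push Not at hlt
  generalize hq : (fun i => num μ δ κ R i w / den μ δ κ R w) = c at hlt
  have hgt : ∀ t, 0 < psi μ δ κ w t → ∑ j, a j * c j < ∑ j, a j * t j := by
    intro t ht
    by_contra hle
    have h1 := ff_mono μ hδ w (not_lt.1 hle)
    have h2 := DD_le μ δ w t a ha
    have h3 : 0 < DD μ δ w t - κ := by
      rcases lt_max_iff.1 ht with h | h
      · exact absurd h (lt_irrefl _)
      · exact h
    linarith
  have hI : 0 < ∫ t in Metric.closedBall (0 : Fin m → ℝ) R,
      (∑ j, a j * t j - ∑ j, a j * c j) * psi μ δ κ w t := by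
    refine pos_int (Continuous.mul (by fun_prop) (psi_cont1 μ δ κ w)) ?_ ht0 ?_
    · intro t
      rcases (psi_nonneg μ δ κ w t).eq_or_lt with h | h
      · rw [← h]; simp
      · exact mul_nonneg (sub_nonneg.2 (hgt t h).le) h.le
    · exact mul_pos (sub_pos.2 (hgt t0 hp0)) hp0
  rw [num_lin, Finset.sum_mul, ← Finset.sum_sub_distrib] at hI
  refine hI.ne' (Finset.sum_eq_zero fun j _ => ?_)
  rw [← hq]
  have := hd.ne'
  field_simp
  simp

theorem center (hm : 0 < m) {δ : ℝ} (hδ : 0 < δ) {κ : ℝ} (hκ0 : 0 < κ) (hκ : κ < 1 / ((m : ℝ) + 1)) :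
    ∃ c : (Fin m → EuclideanSpace ℝ (Fin n)) → Fin m → ℝ,
      ContinuousOn c {w | ∀ j, ‖w j‖ = 1} ∧
      (∀ w i j, c (Function.update w j (- w j)) i = sg j i * c w i) ∧
      ∀ w, (∀ j, ‖w j‖ = 1) → ∀ a, ‖a‖ = 1 → κ ≤ ff μ δ w (c w) a := by
  obtain ⟨κ', hκκ', hκ'⟩ := exists_between hκ
  have hpos : 0 < 1 - ((m : ℝ) + 1) * κ' := by
    rw [lt_div_iff₀ (by positivity)] at hκ'
    linarith
  obtain ⟨R, hR, hRμ⟩ := tight μ _ hpos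
  have hex : ∀ w : Fin m → EuclideanSpace ℝ (Fin n), (∀ j, ‖w j‖ = 1) →
      ∃ t, ‖t‖ < R + 1 ∧ 0 < psi μ δ κ w t := by
    intro w hw
    obtain ⟨t, ht, h⟩ := exists_center μ hδ hR (hκ0.trans hκκ').le hRμ w hw
    refine ⟨t, by linarith, lt_max_of_lt_right ?_⟩
    have := le_DD μ hm δ κ' w t h
    linarith
  have hdenpos : ∀ w : Fin m → EuclideanSpace ℝ (Fin n), (∀ j, ‖w j‖ = 1) →
      0 < den μ δ κ (R + 1) w := by
    intro w hw
    obtain ⟨t, ht, h⟩ := hex w hw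
    exact pos_int (psi_cont1 μ δ κ w) (psi_nonneg μ δ κ w) ht h
  refine ⟨fun w i => num μ δ κ (R + 1) i w / den μ δ κ (R + 1) w, ?_, ?_, ?_⟩
  · refine continuousOn_pi.2 fun i => ?_
    exact (num_cont μ δ κ (R + 1) i).continuousOn.div (den_cont μ δ κ (R + 1)).continuousOn
      fun w hw => (hdenpos w hw).ne'
  · intro w i j
    beta_reduce
    rw [den_flip, num_flip, mul_div_assoc]
  · intro w hw a ha
    obtain ⟨t0, ht0, hp0⟩ := hex w hw
    exact wcenter μ hδ w ht0 hp0 (hdenpos w hw) a ha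

end Weighted
end CT

namespace CT
open MeasureTheory Filter Topology
open scoped RealInnerProductSpace ENNReal

section Final
variable {m k : ℕ}

lemma rho_mono {δ δ' : ℝ} (hδ : 0 < δ) (h : δ ≤ δ') (s : ℝ) : rho δ s ≤ rho δ' s := by
  rcases le_total s 0 with hs | hs
  · rw [rho_of_nonpos hδ hs, rho_of_nonpos (hδ.trans_le h) hs]
  · unfold rho
    gcongr

lemma ff_mono_delta {n : ℕ} (μ : Measure (EuclideanSpace ℝ (Fin n))) [IsProbabilityMeasure μ]
    {δ δ' : ℝ} (hδ : 0 < δ) (h : δ ≤ δ')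
    (w : Fin m → EuclideanSpace ℝ (Fin n)) (t a : Fin m → ℝ) : ff μ δ w t a ≤ ff μ δ' w t a :=
  integral_mono (rho_int _ _ _ _ _) (rho_int _ _ _ _ _) fun _ => rho_mono hδ h _

lemma approx (hm : 0 < m) (μ : Fin (k + 1) → Measure (EuclideanSpace ℝ (Fin (k + m))))
    [∀ i, IsProbabilityMeasure (μ i)] {δ : ℝ} (hδ : 0 < δ) {κ : ℝ} (hκ0 : 0 < κ)
    (hκ : κ < 1 / ((m : ℝ) + 1)) :
    ∃ (w : Fin m → EuclideanSpace ℝ (Fin (k + m))) (t : Fin m → ℝ), Orthonormal ℝ w ∧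
      ∀ i a, ‖a‖ = 1 → κ ≤ ff (μ i) δ w t a := by
  choose c hc hfl hce using fun i => center (μ i) hm hδ hκ0 hκ
  have hB := borsuk_stiefel (m := m) (k := k)
    (fun j r w => if h : r < k then c ⟨r + 1, Nat.succ_lt_succ h⟩ w j - c 0 w j else 0)
  specialize hB ?_ ?_ ?_
  rotate_left 3
  · obtain ⟨w, hw, h⟩ := hB
    refine ⟨w, c 0 w, hw, fun i a ha => ?_⟩
    have : c i w = c 0 w := by
      funext j
      obtain ⟨i, hi⟩ := i
      rcases i with _ | r
      · rfl
      · have := h j r (by omega)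
        rw [dif_pos (by omega)] at this
        linarith
    rw [← this]
    exact hce i w hw.1 a ha
  · intro j r
    by_cases h : r < k
    · simp only [h, dif_pos]
      exact (continuousOn_pi.1 (hc _) j).sub (continuousOn_pi.1 (hc _) j)
    · simp only [h, dif_neg, not_false_eq_true]
      exact continuousOn_const
  · intro j r w
    by_cases h : r < k
    · simp only [h, dif_pos, hfl, sg, if_true]; ring
    · simp only [h, dif_neg, not_false_eq_true, neg_zero]
  · intro j r w i hij
    by_cases h : r < k
    · simp only [h, dif_pos, hfl, sg, if_neg hij.symm]; ring
    · simp only [h, dif_neg, not_false_eq_true]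

lemma bdd {n : ℕ} (μ : Measure (EuclideanSpace ℝ (Fin n))) [IsProbabilityMeasure μ]
    {δ κ κ0 R : ℝ} (hδ : 0 < δ) (hδ1 : δ ≤ 1) (hκ : κ0 ≤ κ)
    (hR : μ {x | R < ‖x‖} < ENNReal.ofReal κ0) (hR0 : 0 < R)
    (w : Fin m → EuclideanSpace ℝ (Fin n)) (hw : ∀ j, ‖w j‖ = 1)
    (t : Fin m → ℝ) (h : ∀ a, ‖a‖ = 1 → κ ≤ ff μ δ w t a) : ‖t‖ ≤ R + 1 := by
  rw [pi_norm_le_iff_of_nonneg (by linarith)]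
  intro j
  have key : ∀ a : Fin m → ℝ, ‖a‖ = 1 → ∃ x, ‖x‖ ≤ R ∧ lin a w t x < δ := by
    intro a ha
    by_contra hne
    push Not at hne
    have h1 : {x | lin a w t x < δ} ⊆ {x | R < ‖x‖} := by
      intro x hx
      by_contra hx'
      exact absurd (hne x (not_lt.1 hx')) (not_le.2 hx)
    have h2 := (ff_le μ hδ w t a).trans (measure_mono h1)
    have h3 := ENNReal.ofReal_le_ofReal (hκ.trans (h a ha))
    exact absurd (h3.trans h2) (not_le.2 hR)
  have hl : ∀ (s : ℝ) x, lin (Pi.single j s) w t x = s * (⟪x, w j⟫ - t j) := by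
    intro s x
    unfold lin
    rw [Finset.sum_eq_single j]
    · simp
    · intro i _ hi; simp [hi]
    · simp
  have hin : ∀ x : EuclideanSpace ℝ (Fin n), ‖x‖ ≤ R → |⟪x, w j⟫| ≤ R := by
    intro x hx
    have := norm_inner_le_norm (𝕜 := ℝ) x (w j)
    rw [hw j, mul_one] at this
    exact this.trans hx
  obtain ⟨x, hx, hx'⟩ := key (Pi.single j 1) (by simp [Pi.norm_single])
  obtain ⟨y, hy, hy'⟩ := key (Pi.single j (-1)) (by simp [Pi.norm_single])
  rw [hl] at hx' hy'
  have := abs_le.1 (hin x hx)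
  have := abs_le.1 (hin y hy)
  rw [Real.norm_eq_abs, abs_le]
  constructor <;> linarith

lemma ff_lim {n : ℕ} (μ : Measure (EuclideanSpace ℝ (Fin n))) [IsProbabilityMeasure μ] (δ : ℝ)
    (a : Fin m → ℝ) {w : ℕ → Fin m → EuclideanSpace ℝ (Fin n)} {t : ℕ → Fin m → ℝ}
    {w' : Fin m → EuclideanSpace ℝ (Fin n)} {t' : Fin m → ℝ}
    (hw : Tendsto w atTop (𝓝 w')) (ht : Tendsto t atTop (𝓝 t')) :
    Tendsto (fun N => ff μ δ (w N) (t N) a) atTop (𝓝 (ff μ δ w' t' a)) := by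
  have h := (ff_cont (m := m) μ δ).tendsto ((w', t'), a)
  have h2 : Tendsto (fun N => ((w N, t N), a)) atTop (𝓝 ((w', t'), a)) :=
    (hw.prodMk_nhds ht).prodMk_nhds tendsto_const_nhds
  have h3 := Tendsto.comp h h2
  exact h3

lemma exact_center (hm : 0 < m) (μ : Fin (k + 1) → Measure (EuclideanSpace ℝ (Fin (k + m))))
    [∀ i, IsProbabilityMeasure (μ i)] :
    ∃ (w : Fin m → EuclideanSpace ℝ (Fin (k + m))) (t : Fin m → ℝ), Orthonormal ℝ w ∧
      ∀ i a, ‖a‖ = 1 → ENNReal.ofReal (1 / ((m : ℝ) + 1)) ≤ μ i {x | lin a w t x ≤ 0} := by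
  set τ : ℝ := 1 / ((m : ℝ) + 1) with hτ
  have hτ0 : 0 < τ := by positivity
  have hA : ∀ N : ℕ, (0 : ℝ) < 1 / ((N : ℝ) + 1) := fun N => by positivity
  have hA1 : ∀ N : ℕ, (1 : ℝ) / ((N : ℝ) + 1) ≤ 1 := fun N => by
    rw [div_le_one (by positivity)]
    have : (0 : ℝ) ≤ N := by positivity
    linarith
  have hAl := tendsto_one_div_add_atTop_nhds_zero_nat (𝕜 := ℝ)
  let κ : ℕ → ℝ := fun N => τ * (1 - 1 / ((N : ℝ) + 1) / 2)
  have hκ2 : ∀ N, τ / 2 ≤ κ N := fun N => by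
    have := hA1 N
    simp only [κ]; nlinarith
  have hκτ : ∀ N, κ N < τ := fun N => by
    have := hA N
    simp only [κ]; nlinarith
  have hκl : Tendsto κ atTop (𝓝 τ) := by
    have := ((hAl.div_const 2).const_sub 1).const_mul τ
    simpa [κ] using this
  choose w t hw hwt using fun N : ℕ => approx (k := k) hm μ (hA N)
    (lt_of_lt_of_le (by linarith) (hκ2 N)) (hκτ N)
  obtain ⟨R, hR0, hR⟩ := tight (μ 0) (τ / 2) (by linarith)
  have hmem : ∀ N, (w N, t N) ∈ Metric.closedBall (0 : Fin m → EuclideanSpace ℝ (Fin (k + m))) 1 ×ˢ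
      Metric.closedBall (0 : Fin m → ℝ) (R + 1) := by
    intro N
    refine ⟨?_, ?_⟩
    · rw [mem_closedBall_zero_iff, pi_norm_le_iff_of_nonneg zero_le_one]
      intro j
      exact ((hw N).1 j).le
    · rw [mem_closedBall_zero_iff]
      exact bdd (μ 0) (hA N) (hA1 N) (hκ2 N) hR hR0 (w N) (hw N).1 (t N) (hwt N 0)
  obtain ⟨⟨w', t'⟩, -, φ, hφ, hlim⟩ := ((isCompact_closedBall _ _).prod
    (isCompact_closedBall _ _)).tendsto_subseq hmem
  have hlw : Tendsto (fun N => w (φ N)) atTop (𝓝 w') := (continuous_fst.tendsto _).comp hlim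
  have hlt : Tendsto (fun N => t (φ N)) atTop (𝓝 t') := (continuous_snd.tendsto _).comp hlim
  refine ⟨w', t', ?_, ?_⟩
  · rw [orthonormal_iff_ite]
    intro i j
    have h1 : Tendsto (fun N => ⟪w (φ N) i, w (φ N) j⟫) atTop (𝓝 ⟪w' i, w' j⟫) :=
      (tendsto_pi_nhds.1 hlw i).inner (tendsto_pi_nhds.1 hlw j)
    have h2 : (fun N => ⟪w (φ N) i, w (φ N) j⟫) = fun _ => if i = j then (1 : ℝ) else 0 := by
      funext N
      exact orthonormal_iff_ite.1 (hw (φ N)) i j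
    rw [h2] at h1
    exact tendsto_nhds_unique h1 tendsto_const_nhds
  · intro i a ha
    have hff : ∀ δ, 0 < δ → τ ≤ ff (μ i) δ w' t' a := by
      intro δ hδ
      have h1 := ff_lim (μ i) δ a hlw hlt
      refine le_of_tendsto_of_tendsto (hκl.comp hφ.tendsto_atTop) h1 ?_
      filter_upwards [(hAl.comp hφ.tendsto_atTop).eventually (ge_mem_nhds hδ)] with N hN
      exact (hwt (φ N) i a ha).trans (ff_mono_delta (μ i) (hA _) hN _ _ _)
    have hset : {x | lin a w' t' x ≤ 0} = ⋂ N : ℕ, {x | lin a w' t' x < 1 / ((N : ℝ) + 1)} := by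
      ext x
      simp only [Set.mem_iInter, Set.mem_setOf_eq]
      constructor
      · intro h N; exact h.trans_lt (hA N)
      · intro h
        exact ge_of_tendsto' hAl fun N => (h N).le
    have hl : Continuous (lin a w' t') := by unfold lin; fun_prop
    have hT := tendsto_measure_iInter_atTop (μ := μ i)
      (s := fun N : ℕ => {x | lin a w' t' x < 1 / ((N : ℝ) + 1)})
      (fun N => (isOpen_lt hl continuous_const).measurableSet.nullMeasurableSet)
      (by
        intro N M hNM x hx
        have hx1 : lin a w' t' x < 1 / ((M : ℝ) + 1) := hx
        refine lt_of_lt_of_le hx1 ?_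
        exact Nat.one_div_le_one_div hNM)
      ⟨0, measure_ne_top _ _⟩
    rw [hset]
    refine ge_of_tendsto' hT fun N => ?_
    exact (ENNReal.ofReal_le_ofReal (hff _ (hA N))).trans (ff_le (μ i) (hA N) w' t' a)

theorem final (hm : 0 < m) (μ : Fin (k + 1) → Measure (EuclideanSpace ℝ (Fin (k + m))))
    [∀ i, IsProbabilityMeasure (μ i)] :
    ∃ V : AffineSubspace ℝ (EuclideanSpace ℝ (Fin (k + m))),
      (V : Set (EuclideanSpace ℝ (Fin (k + m)))).Nonempty ∧
      Module.finrank ℝ V.direction = k ∧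
      ∀ (v : EuclideanSpace ℝ (Fin (k + m))) (α : ℝ), v ≠ 0 →
        (V : Set (EuclideanSpace ℝ (Fin (k + m)))) ⊆ {x | ⟪x, v⟫ ≤ α} →
        ∀ i, ENNReal.ofReal (1 / ((m : ℝ) + 1)) ≤ μ i {x | ⟪x, v⟫ ≤ α} := by
  obtain ⟨w, t, hw, h⟩ := exact_center hm μ
  let S := Submodule.span ℝ (Set.range w)
  let p := ∑ j, t j • w j
  refine ⟨AffineSubspace.mk' p Sᗮ, ⟨p, AffineSubspace.self_mem_mk' _ _⟩, ?_, ?_⟩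
  · rw [AffineSubspace.direction_mk']
    have h1 := Submodule.finrank_add_finrank_orthogonal S
    have h2 : Module.finrank ℝ S = m := by
      rw [finrank_span_eq_card hw.linearIndependent, Fintype.card_fin]
    rw [h2, finrank_euclideanSpace_fin] at h1
    omega
  · intro v α hv hV i
    have hVm : ∀ u ∈ Sᗮ, ⟪p, v⟫ + ⟪u, v⟫ ≤ α := by
      intro u hu
      have : u + p ∈ AffineSubspace.mk' p Sᗮ := by
        rw [AffineSubspace.mem_mk']; simpa using hu
      have h1 : ⟪u + p, v⟫ ≤ α := hV this
      rw [inner_add_left] at h1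
      linarith
    have hvS : v ∈ S := by
      rw [← Submodule.orthogonal_orthogonal S, Submodule.mem_orthogonal]
      intro u hu
      by_contra hne
      have h1 := hVm (((α - ⟪p, v⟫ + 1) / ⟪u, v⟫) • u) (Sᗮ.smul_mem _ hu)
      rw [real_inner_smul_left, div_mul_cancel₀ _ hne] at h1
      linarith
    have hpα : ⟪p, v⟫ ≤ α := by
      have := hVm 0 (Sᗮ.zero_mem)
      simpa using this
    obtain ⟨b, rfl⟩ := (Submodule.mem_span_range_iff_exists_fun ℝ).1 hvS
    have hb : b ≠ 0 := by
      rintro rfl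
      simp at hv
    have hb0 : 0 < ‖b‖ := norm_pos_iff.2 hb
    have hp : ∀ j, ⟪p, w j⟫ = t j := by
      intro j
      simp only [p]
      rw [sum_inner, Finset.sum_eq_single j]
      · rw [real_inner_smul_left, real_inner_self_eq_norm_sq, hw.1 j]; simp
      · intro i _ hij
        rw [real_inner_smul_left, hw.2 hij, mul_zero]
      · simp
    have hpb : ⟪p, ∑ j, b j • w j⟫ = ∑ j, b j * t j := by
      simp [inner_sum, inner_smul_right, hp]
    refine (h i (‖b‖⁻¹ • b) ?_).trans (measure_mono ?_)
    · rw [norm_smul, norm_inv, norm_norm, inv_mul_cancel₀ hb0.ne']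
    · intro x hx
      have h1 : lin (‖b‖⁻¹ • b) w t x = ‖b‖⁻¹ * lin b w t x := by
        simp only [lin, Finset.mul_sum, Pi.smul_apply, smul_eq_mul, mul_assoc]
      have h2 : lin (‖b‖⁻¹ • b) w t x ≤ 0 := hx
      rw [h1] at h2
      have h3 : lin b w t x ≤ 0 := by
        by_contra h4
        exact absurd h2 (not_le.2 (mul_pos (inv_pos.2 hb0) (not_le.1 h4)))
      rw [lin_eq] at h3
      change ⟪x, ∑ j, b j • w j⟫ ≤ α
      linarith

end Final
end CT

open MeasureTheory
open scoped RealInnerProductSpace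

/-- The central transversal theorem. -/
theorem central_transversal (k d : ℕ) (hkd : k < d)
    (μ : Fin (k + 1) → Measure (EuclideanSpace ℝ (Fin d)))
    (hprob : ∀ i, IsProbabilityMeasure (μ i))
    (hac : ∀ i, μ i ≪ volume) :
    ∃ V : AffineSubspace ℝ (EuclideanSpace ℝ (Fin d)),
      (V : Set (EuclideanSpace ℝ (Fin d))).Nonempty ∧
      Module.finrank ℝ V.direction = k ∧
      ∀ (v : EuclideanSpace ℝ (Fin d)) (α : ℝ), v ≠ 0 →
        (V : Set (EuclideanSpace ℝ (Fin d))) ⊆ {x | ⟪x, v⟫ ≤ α} →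
        ∀ i, 1 / ((d - k + 1 : ℕ) : ENNReal) ≤ μ i {x | ⟪x, v⟫ ≤ α} := by
  obtain ⟨m, rfl⟩ : ∃ m, d = k + m := ⟨d - k, by omega⟩
  obtain ⟨V, h1, h2, h3⟩ := CT.final (by omega) μ
  refine ⟨V, h1, h2, fun v α hv hV i => ?_⟩
  refine le_trans (le_of_eq ?_) (h3 v α hv hV i)
  rw [ENNReal.ofReal_div_of_pos (by positivity), ENNReal.ofReal_one]
  congr 1
  rw [show k + m - k + 1 = m + 1 by omega, ← ENNReal.ofReal_natCast]
  push_cast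
  rfl
end

section
/- Let A be a finite family of lines in ℝ², no two of which are parallel, and let (C₁, C₂) be a convex partition of the plane into two parts. Define, for a set K ⊆ ℝ², μ_A(K) to be the maximum cardinality of a subset X ⊆ A such that the intersection point of every pair of distinct lines of X lies in K. Then μ_A(C₁) · μ_A(C₂) ≥ |A|. -/
theorem aux_mirsky {α : Type*} [DecidableEq α] (R : α → α → Prop)
    (hirr : ∀ x, ¬ R x x) (htr : ∀ x y z, R x y → R y z → R x z) (A : Finset α) :
    ∃ X Y : Finset α, X ⊆ A ∧ Y ⊆ A ∧ (∀ x ∈ X, ∀ y ∈ X, x ≠ y → R x y ∨ R y x) ∧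
      (∀ x ∈ Y, ∀ y ∈ Y, ¬ R x y) ∧ A.card ≤ X.card * Y.card := by
  classical
  rcases A.eq_empty_or_nonempty with rfl | hA
  · exact ⟨∅, ∅, by simp, by simp, by simp, by simp, by simp⟩
  let F : α → Finset (Finset α) := fun x => A.powerset.filter
    (fun X => (∀ a ∈ X, ∀ b ∈ X, a ≠ b → R a b ∨ R b a) ∧ ∀ a ∈ X, R a x)
  let h : α → ℕ := fun x => (F x).sup Finset.card
  have hF : ∀ x, ∃ X, X ⊆ A ∧ (∀ a ∈ X, ∀ b ∈ X, a ≠ b → R a b ∨ R b a) ∧ (∀ a ∈ X, R a x) ∧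
      X.card = h x := by
    intro x
    have hne : (F x).Nonempty := ⟨∅, by simp [F]⟩
    obtain ⟨X, hX, hc⟩ := Finset.exists_mem_eq_sup (F x) hne Finset.card
    simp only [F, Finset.mem_filter, Finset.mem_powerset] at hX
    exact ⟨X, hX.1, hX.2.1, hX.2.2, hc.symm⟩
  have hins : ∀ x ∈ A, ∃ X, X ⊆ A ∧ (∀ a ∈ X, ∀ b ∈ X, a ≠ b → R a b ∨ R b a) ∧
      (∀ a ∈ X, a = x ∨ R a x) ∧ X.card = h x + 1 := by
    intro x hx
    obtain ⟨X, h1, h2, h3, h4⟩ := hF x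
    refine ⟨insert x X, ?_, ?_, ?_, ?_⟩
    · intro a ha
      rcases Finset.mem_insert.1 ha with rfl | ha
      · exact hx
      · exact h1 ha
    · intro a ha b hb hab
      rcases Finset.mem_insert.1 ha with ha1 | ha1 <;>
        rcases Finset.mem_insert.1 hb with hb1 | hb1
      · exact absurd (ha1.trans hb1.symm) hab
      · exact Or.inr (ha1 ▸ h3 _ hb1)
      · exact Or.inl (hb1 ▸ h3 _ ha1)
      · exact h2 a ha1 b hb1 hab
    · intro a ha
      rcases Finset.mem_insert.1 ha with rfl | ha
      · exact Or.inl rfl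
      · exact Or.inr (h3 _ ha)
    · rw [Finset.card_insert_of_notMem (fun hx' => hirr x (h3 x hx')), h4]
  have hlt : ∀ x ∈ A, ∀ y, R x y → h x < h y := by
    intro x hx y hxy
    obtain ⟨X, h1, h2, h3, h4⟩ := hins x hx
    have : X ∈ F y := by
      simp only [F, Finset.mem_filter, Finset.mem_powerset]
      refine ⟨h1, h2, fun a ha => ?_⟩
      rcases h3 a ha with rfl | h'
      · exact hxy
      · exact htr _ _ _ h' hxy
    have := Finset.le_sup (f := Finset.card) this
    change _ ≤ h y at this
    omega
  obtain ⟨x0, hx0, hmax⟩ := A.exists_max_image h hA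
  obtain ⟨X, h1, h2, -, h4⟩ := hins x0 hx0
  obtain ⟨k, -, hk⟩ := (Finset.range (h x0 + 1)).exists_max_image
    (fun k => (A.filter (fun x => h x = k)).card) ⟨0, by simp⟩
  refine ⟨X, A.filter (fun x => h x = k), h1, Finset.filter_subset _ _, h2, ?_, ?_⟩
  · intro x hx y hy hxy
    simp only [Finset.mem_filter] at hx hy
    have := hlt x hx.1 y hxy
    omega
  · rw [Finset.card_eq_sum_card_fiberwise (f := h) (t := Finset.range (h x0 + 1)), h4]
    · refine (Finset.sum_le_card_nsmul _ _ _ hk).trans ?_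
      simp
    · intro x hx
      have := hmax x hx
      simp only [Finset.coe_range, Set.mem_Iio]
      omega

def auxLab (f g : EuclideanSpace ℝ (Fin 2) →ₗ[ℝ] ℝ) (u : ℝ)
    (l : AffineSubspace ℝ (EuclideanSpace ℝ (Fin 2))) (m b : EReal) : Prop :=
  ∃ v, l.direction = Submodule.span ℝ {v} ∧ v ≠ 0 ∧
    ((f v ≠ 0 ∧ ∃ m' b' : ℝ, m = m' ∧ b = b' ∧ g v = m' * f v ∧
        ∀ z ∈ l, g z = m' * (f z - u) + b') ∨
     (f v = 0 ∧ m = ⊤ ∧ ∃ c, (∀ z ∈ l, f z = c) ∧ ((c ≤ u ∧ b = ⊤) ∨ (u < c ∧ b = ⊥))))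

theorem auxLab_exists (f g : EuclideanSpace ℝ (Fin 2) →ₗ[ℝ] ℝ) (u : ℝ)
    (l : AffineSubspace ℝ (EuclideanSpace ℝ (Fin 2)))
    (h1 : (l : Set (EuclideanSpace ℝ (Fin 2))).Nonempty)
    (h2 : Module.finrank ℝ l.direction = 1) : ∃ m b, auxLab f g u l m b := by
  obtain ⟨P, hP⟩ := h1
  obtain ⟨⟨v, hvm⟩, hv0, hv⟩ := finrank_eq_one_iff'.1 h2
  have hv0' : v ≠ 0 := fun h => hv0 (by simp [h])
  have hspan : l.direction = Submodule.span ℝ {v} := by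
    apply le_antisymm
    · intro w hw
      obtain ⟨c, hc⟩ := hv ⟨w, hw⟩
      rw [Submodule.mem_span_singleton]
      exact ⟨c, congrArg Subtype.val hc⟩
    · simpa using hvm
  have hz : ∀ z ∈ l, ∃ t : ℝ, z = P + t • v := by
    intro z hz
    have : z -ᵥ P ∈ l.direction := AffineSubspace.vsub_mem_direction hz hP
    rw [hspan, Submodule.mem_span_singleton] at this
    obtain ⟨t, ht⟩ := this
    refine ⟨t, ?_⟩
    rw [ht]; simp
  by_cases hf : f v = 0
  · have hc : ∀ z ∈ l, f z = f P := by
      intro z hzl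
      obtain ⟨t, rfl⟩ := hz z hzl
      simp [hf]
    by_cases hcu : f P ≤ u
    · exact ⟨⊤, ⊤, v, hspan, hv0', Or.inr ⟨hf, rfl, f P, hc, Or.inl ⟨hcu, rfl⟩⟩⟩
    · exact ⟨⊤, ⊥, v, hspan, hv0', Or.inr ⟨hf, rfl, f P, hc, Or.inr ⟨not_le.1 hcu, rfl⟩⟩⟩
  · have hg : g v = g v / f v * f v := by field_simp
    refine ⟨_, _, v, hspan, hv0', Or.inl ⟨hf, g v / f v, g P - g v / f v * (f P - u), rfl, rfl,
      hg, ?_⟩⟩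
    intro z hzl
    obtain ⟨t, rfl⟩ := hz z hzl
    simp only [map_add, map_smul, smul_eq_mul]
    linear_combination t * hg

theorem auxLab_ne (f g : EuclideanSpace ℝ (Fin 2) →ₗ[ℝ] ℝ) (u : ℝ)
    (hfg : ∀ w, f w = 0 → g w = 0 → w = 0)
    (l l' : AffineSubspace ℝ (EuclideanSpace ℝ (Fin 2))) (m b m' b' : EReal)
    (h : auxLab f g u l m b) (h' : auxLab f g u l' m' b') (hd : l.direction ≠ l'.direction) :
    m ≠ m' := by
  rintro rfl
  apply hd
  obtain ⟨v, hv, hv0, h⟩ := h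
  obtain ⟨w, hw, hw0, h'⟩ := h'
  have key : ∀ s t : ℝ, s ≠ 0 → t ≠ 0 → s • v - t • w = 0 → l.direction = l'.direction := by
    intro s t hs ht h
    rw [sub_eq_zero] at h
    rw [hv, hw, ← Submodule.span_singleton_smul_eq (IsUnit.mk0 s hs) v,
      ← Submodule.span_singleton_smul_eq (IsUnit.mk0 t ht) w, h]
  rcases h with ⟨hf, p, q, hm, -, hg, -⟩ | ⟨hf, hm, -⟩ <;>
    rcases h' with ⟨hf', p', q', hm', -, hg', -⟩ | ⟨hf', hm', -⟩
  · have : p = p' := by rw [hm] at hm'; exact_mod_cast hm'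
    subst this
    refine key (f w) (f v) hf' hf (hfg _ ?_ ?_)
    · simp; ring
    · simp [hg, hg']; ring
  · rw [hm] at hm'; simp at hm'
  · rw [hm] at hm'; simp at hm'
  · have hgv : g v ≠ 0 := fun h => hv0 (hfg _ hf h)
    have hgw : g w ≠ 0 := fun h => hw0 (hfg _ hf' h)
    refine key (g w) (g v) hgw hgv (hfg _ ?_ ?_)
    · simp [hf, hf']
    · simp; ring

theorem auxLab_le (f g : EuclideanSpace ℝ (Fin 2) →ₗ[ℝ] ℝ) (u : ℝ)
    (l l' : AffineSubspace ℝ (EuclideanSpace ℝ (Fin 2))) (m b m' b' : EReal)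
    (h : auxLab f g u l m b) (h' : auxLab f g u l' m' b') (hm : m < m')
    (z : EuclideanSpace ℝ (Fin 2)) (hz : z ∈ l) (hz' : z ∈ l') :
    (b ≤ b' → f z ≤ u) ∧ (b' < b → u ≤ f z) := by
  obtain ⟨v, -, -, h⟩ := h
  obtain ⟨w, -, -, h'⟩ := h'
  rcases h with ⟨-, p, q, rfl, rfl, -, hl⟩ | ⟨hf, rfl, -⟩
  · have e1 := hl z hz
    rcases h' with ⟨-, p', q', rfl, rfl, -, hl'⟩ | ⟨-, rfl, c, hc, h'⟩
    · have e2 := hl' z hz'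
      have hm' : p < p' := by exact_mod_cast hm
      constructor
      · intro hb
        have hb' : q ≤ q' := by exact_mod_cast hb
        by_contra hcon
        push Not at hcon
        nlinarith [mul_pos (sub_pos.2 hm') (sub_pos.2 hcon)]
      · intro hb
        have hb' : q' < q := by exact_mod_cast hb
        by_contra hcon
        push Not at hcon
        nlinarith [mul_pos (sub_pos.2 hm') (sub_pos.2 hcon)]
    · rw [hc z hz']
      rcases h' with ⟨hcu, rfl⟩ | ⟨hcu, rfl⟩
      · exact ⟨fun _ => hcu, fun hb => absurd hb (by simp)⟩
      · exact ⟨fun hb => absurd hb (by simp), fun _ => hcu.le⟩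
  · exact absurd hm (by simp)


/-- Dujmović–Langerman's lemma (via Erdős–Szekeres): for a convex partition
`(C₁, C₂)` of the plane and a family `A` of pairwise non-parallel lines,
`μ_A(C₁) · μ_A(C₂) ≥ |A|`. -/
theorem lines_product_lemma
    (A : Finset (AffineSubspace ℝ (EuclideanSpace ℝ (Fin 2))))
    (hline : ∀ ℓ ∈ A, (ℓ : Set (EuclideanSpace ℝ (Fin 2))).Nonempty ∧
      Module.finrank ℝ ℓ.direction = 1)
    (hpar : ∀ ℓ ∈ A, ∀ ℓ' ∈ A, ℓ ≠ ℓ' → ℓ.direction ≠ ℓ'.direction)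
    (C₁ C₂ : Set (EuclideanSpace ℝ (Fin 2)))
    (hcl : IsClosed C₁ ∧ IsClosed C₂) (hconv : Convex ℝ C₁ ∧ Convex ℝ C₂)
    (hcover : C₁ ∪ C₂ = Set.univ)
    (hdisj : Disjoint (interior C₁) (interior C₂)) :
    ∃ X₁ X₂ : Finset (AffineSubspace ℝ (EuclideanSpace ℝ (Fin 2))),
      X₁ ⊆ A ∧ X₂ ⊆ A ∧
      (∀ ℓ ∈ X₁, ∀ ℓ' ∈ X₁, ℓ ≠ ℓ' →
        (ℓ : Set (EuclideanSpace ℝ (Fin 2))) ∩ ℓ' ⊆ C₁) ∧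
      (∀ ℓ ∈ X₂, ∀ ℓ' ∈ X₂, ℓ ≠ ℓ' →
        (ℓ : Set (EuclideanSpace ℝ (Fin 2))) ∩ ℓ' ⊆ C₂) ∧
      A.card ≤ X₁.card * X₂.card := by
  classical
  by_cases hC1 : interior C₁ = ∅
  · have hall : ∀ z, z ∈ C₂ := by
      intro z
      by_contra hz
      have : z ∈ interior C₁ := by
        refine interior_maximal ?_ hcl.2.isOpen_compl hz
        intro y hy
        exact (hcover.ge (Set.mem_univ y)).resolve_right hy
      simp [hC1] at this
    rcases A.eq_empty_or_nonempty with rfl | ⟨l, hl⟩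
    · exact ⟨∅, ∅, by simp⟩
    · refine ⟨{l}, A, by simpa using hl, subset_rfl, ?_, fun _ _ _ _ _ z _ => hall z, by simp⟩
      intro a ha b hb hab
      rw [Finset.mem_singleton] at ha hb
      exact absurd (ha.trans hb.symm) hab
  by_cases hC2 : interior C₂ = ∅
  · have hall : ∀ z, z ∈ C₁ := by
      intro z
      by_contra hz
      have : z ∈ interior C₂ := by
        refine interior_maximal ?_ hcl.1.isOpen_compl hz
        intro y hy
        exact (hcover.ge (Set.mem_univ y)).resolve_left hy
      simp [hC2] at this
    rcases A.eq_empty_or_nonempty with rfl | ⟨l, hl⟩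
    · exact ⟨∅, ∅, by simp⟩
    · refine ⟨A, {l}, subset_rfl, by simpa using hl, fun _ _ _ _ _ z _ => hall z, ?_, by simp⟩
      intro a ha b hb hab
      rw [Finset.mem_singleton] at ha hb
      exact absurd (ha.trans hb.symm) hab
  obtain ⟨y1, hy1⟩ := Set.nonempty_iff_ne_empty.2 hC1
  obtain ⟨y2, hy2⟩ := Set.nonempty_iff_ne_empty.2 hC2
  obtain ⟨f, u, hf1, hf2⟩ := geometric_hahn_banach_open_open hconv.1.interior isOpen_interior
    hconv.2.interior isOpen_interior hdisj
  have hle : ∀ z, f z ≤ u → z ∈ C₁ := by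
    intro z hz
    by_contra hzC
    have : z ∈ interior C₂ := by
      refine interior_maximal ?_ hcl.1.isOpen_compl hzC
      intro y hy
      exact (hcover.ge (Set.mem_univ y)).resolve_left hy
    exact absurd (hf2 z this) (not_lt.2 hz)
  have hge : ∀ z, u ≤ f z → z ∈ C₂ := by
    intro z hz
    by_contra hzC
    have : z ∈ interior C₁ := by
      refine interior_maximal ?_ hcl.2.isOpen_compl hzC
      intro y hy
      exact (hcover.ge (Set.mem_univ y)).resolve_right hy
    exact absurd (hf1 z this) (not_lt.2 hz)
  obtain ⟨p, q, hpq⟩ : ∃ p q : ℝ, ∀ z, f z = p * z 0 + q * z 1 := by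
    refine ⟨f (EuclideanSpace.single 0 1), f (EuclideanSpace.single 1 1), fun z => ?_⟩
    have : z = z 0 • EuclideanSpace.single 0 1 + z 1 • EuclideanSpace.single 1 1 := by
      ext i
      fin_cases i <;> simp
    conv_lhs => rw [this]
    simp [mul_comm]
  have hpq0 : 0 < p ^ 2 + q ^ 2 := by
    by_contra hcon
    have hp : p = 0 := by nlinarith [sq_nonneg p, sq_nonneg q]
    have hq : q = 0 := by nlinarith [sq_nonneg p, sq_nonneg q]
    have e1 := hf1 y1 hy1
    have e2 := hf2 y2 hy2
    rw [hpq, hp, hq] at e1 e2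
    linarith
  let g : EuclideanSpace ℝ (Fin 2) →ₗ[ℝ] ℝ :=
    { toFun := fun z => p * z 1 - q * z 0
      map_add' := by intro x y; simp; ring
      map_smul' := by intro c x; simp; ring }
  have hg : ∀ z, g z = p * z 1 - q * z 0 := fun z => rfl
  let f' : EuclideanSpace ℝ (Fin 2) →ₗ[ℝ] ℝ := f.toLinearMap
  have hff' : ∀ z, f' z = f z := fun z => rfl
  have hfg : ∀ w, f' w = 0 → g w = 0 → w = 0 := by
    intro w h1 h2
    rw [hff', hpq] at h1
    rw [hg] at h2
    have h3 : (p ^ 2 + q ^ 2) * w 0 = 0 := by linear_combination p * h1 - q * h2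
    have h4 : (p ^ 2 + q ^ 2) * w 1 = 0 := by linear_combination q * h1 + p * h2
    have h3' := (mul_eq_zero.1 h3).resolve_left hpq0.ne'
    have h4' := (mul_eq_zero.1 h4).resolve_left hpq0.ne'
    ext i
    fin_cases i
    · simpa using h3'
    · simpa using h4'
  have hex : ∀ l : AffineSubspace ℝ (EuclideanSpace ℝ (Fin 2)), ∃ mb : EReal × EReal,
      l ∈ A → auxLab f' g u l mb.1 mb.2 := by
    intro l
    by_cases hl : l ∈ A
    · obtain ⟨m, b, h⟩ := auxLab_exists f' g u l (hline l hl).1 (hline l hl).2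
      exact ⟨(m, b), fun _ => h⟩
    · exact ⟨(0, 0), fun h => absurd h hl⟩
  choose lab hlab using hex
  obtain ⟨X, Y, hX, hY, hXc, hYc, hcard⟩ := aux_mirsky
    (fun l l' => (lab l).1 < (lab l').1 ∧ (lab l).2 ≤ (lab l').2)
    (fun x h => lt_irrefl _ h.1) (fun x y z h h' => ⟨h.1.trans h'.1, h.2.trans h'.2⟩) A
  refine ⟨X, Y, hX, hY, ?_, ?_, hcard⟩
  · rintro l hl l' hl' hne z ⟨hz, hz'⟩
    rcases hXc l hl l' hl' hne with h | h
    · exact hle z ((auxLab_le f' g u l l' _ _ _ _ (hlab l (hX hl)) (hlab l' (hX hl')) h.1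
        z hz hz').1 h.2)
    · exact hle z ((auxLab_le f' g u l' l _ _ _ _ (hlab l' (hX hl')) (hlab l (hX hl)) h.1
        z hz' hz).1 h.2)
  · rintro l hl l' hl' hne z ⟨hz, hz'⟩
    have hmm := auxLab_ne f' g u hfg l l' _ _ _ _ (hlab l (hY hl)) (hlab l' (hY hl'))
      (hpar l (hY hl) l' (hY hl') hne)
    rcases lt_or_gt_of_ne hmm with h | h
    · have hb := hYc l hl l' hl'
      exact hge z ((auxLab_le f' g u l l' _ _ _ _ (hlab l (hY hl)) (hlab l' (hY hl')) h
        z hz hz').2 (not_le.1 fun hb' => hb ⟨h, hb'⟩))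
    · have hb := hYc l' hl' l hl
      exact hge z ((auxLab_le f' g u l' l _ _ _ _ (hlab l' (hY hl')) (hlab l (hY hl)) h
        z hz' hz).2 (not_le.1 fun hb' => hb ⟨h, hb'⟩))
end
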